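/- arXiv:1904.05147 — 3 statements merged into one kernel-verified Lean document; each statement's English description precedes it below -/
import Mathlib

section
/- Existence for the DPP: for every bounded Borel function F : Γ_ε → ℝ there exists a bounded Borel function u : Ω_ε → ℝ such that u = F on Γ_ε and u satisfies the DPP at every point of Ω. -/
open MeasureTheory Metric Set Filter Topology

section DynamicProgramming

variable {E : Type*} [NormedAddCommGroup E] [MeasurableSpace E]

/-- The right-hand side of the dynamic programming principle with weights `a` and `b`. -/
noncomputable def dppAverage (μ : Measure E) (a b ε : ℝ) (u : E → ℝ) (x : E) : ℝ :=
  a / (2 * ε) * (∫ t in (0 : ℝ)..ε, (sSup (u '' ball x t) + sInf (u '' ball x t)))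
    + b * ⨍ z in ball x ε, u z ∂μ

lemma bddAbove_image_of_abs_le {X : Type*} {u : X → ℝ} {M : ℝ} (hu : ∀ x, |u x| ≤ M)
    (s : Set X) : BddAbove (u '' s) :=
  ⟨M, by rintro _ ⟨z, -, rfl⟩; exact (abs_le.1 (hu z)).2⟩

lemma bddBelow_image_of_abs_le {X : Type*} {u : X → ℝ} {M : ℝ} (hu : ∀ x, |u x| ≤ M)
    (s : Set X) : BddBelow (u '' s) :=
  ⟨-M, by rintro _ ⟨z, -, rfl⟩; exact (abs_le.1 (hu z)).1⟩

lemma abs_sSup_image_le {X : Type*} {u : X → ℝ} {M : ℝ} (hM : 0 ≤ M) (hu : ∀ x, |u x| ≤ M)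
    (s : Set X) : |sSup (u '' s)| ≤ M := by
  rcases s.eq_empty_or_nonempty with rfl | ⟨y, hy⟩
  · simpa using hM
  · refine abs_le.2 ⟨(abs_le.1 (hu y)).1.trans
      (le_csSup (bddAbove_image_of_abs_le hu s) (mem_image_of_mem u hy)), ?_⟩
    refine csSup_le ⟨_, mem_image_of_mem u hy⟩ ?_
    rintro _ ⟨z, -, rfl⟩
    exact (abs_le.1 (hu z)).2

lemma sInf_image_eq_neg_sSup {X : Type*} (u : X → ℝ) (s : Set X) :
    sInf (u '' s) = -sSup ((fun z => -u z) '' s) := by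
  rw [Real.sInf_def, ← Set.image_neg_eq_neg, Set.image_image]

lemma abs_sInf_image_le {X : Type*} {u : X → ℝ} {M : ℝ} (hM : 0 ≤ M) (hu : ∀ x, |u x| ≤ M)
    (s : Set X) : |sInf (u '' s)| ≤ M := by
  rw [sInf_image_eq_neg_sSup, abs_neg]
  exact abs_sSup_image_le hM (by simpa using hu) s

lemma sSup_add_sInf_image_le {X : Type*} {v w : X → ℝ} {M c : ℝ} (hv : ∀ x, |v x| ≤ M)
    (hw : ∀ x, |w x| ≤ M) (h : ∀ x, w x ≤ v x + c) {s : Set X} (hs : s.Nonempty) :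
    sSup (w '' s) + sInf (w '' s) ≤ sSup (v '' s) + sInf (v '' s) + 2 * c := by
  have h₁ : sSup (w '' s) ≤ sSup (v '' s) + c := by
    refine csSup_le (hs.image w) ?_
    rintro _ ⟨z, hz, rfl⟩
    linarith [h z, le_csSup (bddAbove_image_of_abs_le hv s) (mem_image_of_mem v hz)]
  have h₂ : sInf (w '' s) - c ≤ sInf (v '' s) := by
    refine le_csInf (hs.image v) ?_
    rintro _ ⟨z, hz, rfl⟩
    linarith [h z, csInf_le (bddBelow_image_of_abs_le hw s) (mem_image_of_mem w hz)]
  linarith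

open Classical in
/-- The value iteration map: average inside `s`, keep the prescribed values `g` outside. -/
noncomputable def dppStep (μ : Measure E) (a b ε : ℝ) (s : Set E) (g u : E → ℝ) : E → ℝ :=
  s.piecewise (dppAverage μ a b ε u) g

open Classical in
/-- Value iteration for the dynamic programming principle, started from the constant `-M`
inside `s`. -/
noncomputable def dppIterate (μ : Measure E) (a b ε M : ℝ) (s : Set E) (g : E → ℝ) : ℕ → E → ℝ
  | 0 => s.piecewise (fun _ => -M) g
  | k + 1 => dppStep μ a b ε s g (dppIterate μ a b ε M s g k)

lemma dppIterate_of_notMem (μ : Measure E) {a b ε M : ℝ} {s : Set E} {g : E → ℝ}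
    (k : ℕ) {x : E} (hx : x ∉ s) :
    dppIterate μ a b ε M s g k x = g x := by
  cases k <;> simp [dppIterate, dppStep, hx]

lemma dppIterate_succ_of_mem (μ : Measure E) {a b ε M : ℝ} {s : Set E} {g : E → ℝ}
    (k : ℕ) {x : E} (hx : x ∈ s) :
    dppIterate μ a b ε M s g (k + 1) x =
      dppAverage μ a b ε (dppIterate μ a b ε M s g k) x := by
  simp [dppIterate, dppStep, hx]

variable [BorelSpace E]

lemma measurable_sSup_image_ball {u : E → ℝ} {M : ℝ} (hu : ∀ x, |u x| ≤ M) :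
    Measurable fun q : E × ℝ => sSup (u '' ball q.1 q.2) := by
  refine measurable_of_Ioi fun c => ?_
  have h : (fun q : E × ℝ => sSup (u '' ball q.1 q.2)) ⁻¹' Ioi c =
      (⋃ z ∈ {z | c < u z}, {q : E × ℝ | dist z q.1 < q.2}) ∪
        ({q : E × ℝ | q.2 ≤ 0} ∩ {_q | c < 0}) := by
    ext ⟨x, t⟩
    simp only [mem_preimage, mem_Ioi, mem_union, mem_iUnion, mem_ofPred_eq, mem_inter_iff,
      exists_prop]
    rcases le_or_gt t 0 with ht | ht
    · have hd : ∀ z, ¬ dist z x < t := fun z => not_lt.2 (ht.trans dist_nonneg)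
      simp [ball_eq_empty.2 ht, ht, hd]
    · rw [lt_csSup_iff (bddAbove_image_of_abs_le hu _) ((nonempty_ball.2 ht).image u)]
      simp only [exists_mem_image, mem_ball, not_le.2 ht, false_and, or_false]
      exact exists_congr fun z => and_comm
  rw [h]
  refine MeasurableSet.union (IsOpen.measurableSet ?_) (MeasurableSet.inter ?_ (.const _))
  · exact isOpen_biUnion fun z _ => isOpen_lt (by fun_prop) (by fun_prop)
  · exact (isClosed_le (by fun_prop) (by fun_prop)).measurableSet

lemma measurable_sInf_image_ball {u : E → ℝ} {M : ℝ} (hu : ∀ x, |u x| ≤ M) :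
    Measurable fun q : E × ℝ => sInf (u '' ball q.1 q.2) := by
  simp only [sInf_image_eq_neg_sSup]
  exact (measurable_sSup_image_ball (M := M) (by simpa using hu)).neg

lemma measurable_sSup_add_sInf_image_ball {u : E → ℝ} {M : ℝ} (hu : ∀ x, |u x| ≤ M) :
    Measurable fun q : E × ℝ => sSup (u '' ball q.1 q.2) + sInf (u '' ball q.1 q.2) :=
  (measurable_sSup_image_ball hu).add (measurable_sInf_image_ball hu)

lemma intervalIntegrable_sSup_add_sInf {u : E → ℝ} {M : ℝ} (hM : 0 ≤ M)
    (hu : ∀ x, |u x| ≤ M) (x : E) (r s : ℝ) :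
    IntervalIntegrable (fun t => sSup (u '' ball x t) + sInf (u '' ball x t)) volume r s := by
  refine (intervalIntegrable_const (c := M + M)).mono_fun
    ((measurable_sSup_add_sInf_image_ball hu).comp
      measurable_prodMk_left).aestronglyMeasurable (.of_forall fun t => ?_)
  simp only [Real.norm_eq_abs]
  rw [abs_of_nonneg (add_nonneg hM hM)]
  exact (abs_add_le _ _).trans (add_le_add (abs_sSup_image_le hM hu _) (abs_sInf_image_le hM hu _))

variable [NormedSpace ℝ E] [FiniteDimensional ℝ E] (μ : Measure E) [μ.IsAddHaarMeasure]

lemma integrableOn_ball_of_abs_le {u : E → ℝ} {M : ℝ} (hm : Measurable u)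
    (hu : ∀ x, |u x| ≤ M) (x : E) (r : ℝ) : IntegrableOn u (ball x r) μ :=
  Measure.integrableOn_of_bounded measure_ball_lt_top.ne hm.aestronglyMeasurable
    (.of_forall hu)

lemma measurable_dppAverage {a b ε M : ℝ} (hε : 0 < ε) {u : E → ℝ} (hm : Measurable u)
    (hu : ∀ x, |u x| ≤ M) : Measurable (dppAverage μ a b ε u) := by
  have h₁ : Measurable fun x : E =>
      ∫ t in (0 : ℝ)..ε, (sSup (u '' ball x t) + sInf (u '' ball x t)) := by
    simp only [intervalIntegral.integral_of_le hε.le]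
    exact ((measurable_sSup_add_sInf_image_ball hu).stronglyMeasurable.integral_prod_right
      (ν := volume.restrict (Ioc 0 ε))).measurable
  have h₂ : Measurable fun x : E => ⨍ z in ball x ε, u z ∂μ := by
    simp only [setAverage_eq, measureReal_def, Measure.addHaar_ball_center μ _ ε, smul_eq_mul]
    refine Measurable.const_mul ?_ _
    have hs : MeasurableSet {q : E × E | dist q.2 q.1 < ε} :=
      (isOpen_lt (by fun_prop) (by fun_prop)).measurableSet
    have hk := ((hm.comp measurable_snd).indicator hs).stronglyMeasurable.integral_prod_right'
      (ν := μ)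
    convert hk.measurable using 2 with x
    rw [← integral_indicator measurableSet_ball]
    rfl
  exact (h₁.const_mul _).add (h₂.const_mul _)

lemma dppAverage_le_add {a b ε M c : ℝ} (ha : 0 ≤ a) (hε : 0 < ε) (hM : 0 ≤ M)
    {v w : E → ℝ} (hvm : Measurable v) (hv : ∀ x, |v x| ≤ M) (hwm : Measurable w)
    (hw : ∀ x, |w x| ≤ M) (h : ∀ x, w x ≤ v x + c) (x : E) :
    dppAverage μ a b ε w x ≤
      dppAverage μ a b ε v x + a * c + b * ⨍ z in ball x ε, (w z - v z) ∂μ := by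
  have h₁ : ∫ t in (0 : ℝ)..ε, (sSup (w '' ball x t) + sInf (w '' ball x t)) ≤
      (∫ t in (0 : ℝ)..ε, (sSup (v '' ball x t) + sInf (v '' ball x t))) + 2 * ε * c := by
    have hi := intervalIntegrable_sSup_add_sInf hM hv x 0 ε
    calc _ ≤ ∫ t in (0 : ℝ)..ε, (sSup (v '' ball x t) + sInf (v '' ball x t) + 2 * c) :=
          intervalIntegral.integral_mono_on_of_le_Ioo hε.le
            (intervalIntegrable_sSup_add_sInf hM hw x 0 ε) (hi.add intervalIntegrable_const)
            fun t ht => sSup_add_sInf_image_le hv hw h (nonempty_ball.2 ht.1)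
      _ = _ := by
          rw [intervalIntegral.integral_add hi intervalIntegrable_const,
            intervalIntegral.integral_const, smul_eq_mul]
          ring
  have h₂ : ⨍ z in ball x ε, (w z - v z) ∂μ =
      (⨍ z in ball x ε, w z ∂μ) - ⨍ z in ball x ε, v z ∂μ := by
    simp only [setAverage_eq]
    rw [integral_sub (integrableOn_ball_of_abs_le μ hwm hw x ε)
      (integrableOn_ball_of_abs_le μ hvm hv x ε), smul_sub]
  have h₃ := mul_le_mul_of_nonneg_left h₁ (div_nonneg ha (by positivity : 0 ≤ 2 * ε))
  have h₄ : a / (2 * ε) * (2 * ε * c) = a * c := by field_simp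
  rw [mul_add, h₄] at h₃
  unfold dppAverage
  rw [h₂]
  linarith

lemma setAverage_ball_le_of_le {ε M c : ℝ} (hε : 0 < ε) {f : E → ℝ} (hm : Measurable f)
    (hf : ∀ x, |f x| ≤ M) (h : ∀ x, f x ≤ c) (x : E) : ⨍ z in ball x ε, f z ∂μ ≤ c := by
  have hpos : 0 < μ.real (ball x ε) :=
    ENNReal.toReal_pos (measure_ball_pos μ x hε).ne' measure_ball_lt_top.ne
  rw [setAverage_eq, smul_eq_mul, inv_mul_le_iff₀ hpos]
  calc _ ≤ ∫ _ in ball x ε, c ∂μ :=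
        setIntegral_mono (integrableOn_ball_of_abs_le μ hm hf x ε)
          (integrableOn_const measure_ball_lt_top.ne) h
    _ = _ := by simp

lemma dppAverage_le_add_const {a b ε M c : ℝ} (ha : 0 ≤ a) (hb : 0 ≤ b) (hab : a + b = 1)
    (hε : 0 < ε) (hM : 0 ≤ M)
    {v w : E → ℝ} (hvm : Measurable v) (hv : ∀ x, |v x| ≤ M) (hwm : Measurable w)
    (hw : ∀ x, |w x| ≤ M) (h : ∀ x, w x ≤ v x + c) (x : E) :
    dppAverage μ a b ε w x ≤ dppAverage μ a b ε v x + c := by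
  have h₁ := dppAverage_le_add μ (b := b) ha hε hM hvm hv hwm hw h x
  have h₂ := setAverage_ball_le_of_le μ hε (hwm.sub hvm) (M := M + M)
    (fun y => (abs_sub _ _).trans (add_le_add (hw y) (hv y)))
    (fun y => show w y - v y ≤ c by linarith [h y]) x
  have h₃ := mul_le_mul_of_nonneg_left h₂ hb
  simp only [Pi.sub_apply] at h₃
  have h₄ : a * c + b * c = c := by rw [← add_mul, hab, one_mul]
  linarith

lemma dppAverage_const {a b ε : ℝ} (hab : a + b = 1) (hε : 0 < ε) (c : ℝ) (x : E) :
    dppAverage μ a b ε (fun _ => c) x = c := by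
  have h₁ : ∫ t in (0 : ℝ)..ε,
      (sSup ((fun _ : E => c) '' ball x t) + sInf ((fun _ : E => c) '' ball x t)) =
      2 * ε * c := by
    rw [intervalIntegral.integral_of_le hε.le,
      setIntegral_congr_fun measurableSet_Ioc (g := fun _ => 2 * c)]
    · rw [← intervalIntegral.integral_of_le hε.le, intervalIntegral.integral_const, smul_eq_mul]
      ring
    · intro t ht
      simp only [(nonempty_ball.2 ht.1).image_const, csSup_singleton, csInf_singleton]
      ring
  unfold dppAverage
  rw [h₁, setAverage_const (measure_ball_pos μ x hε).ne' measure_ball_lt_top.ne]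
  have : a / (2 * ε) * (2 * ε * c) = a * c := by field_simp
  rw [this, ← add_mul, hab, one_mul]

lemma abs_dppAverage_le {a b ε M : ℝ} (ha : 0 ≤ a) (hb : 0 ≤ b) (hab : a + b = 1)
    (hε : 0 < ε) (hM : 0 ≤ M) {u : E → ℝ} (hm : Measurable u) (hu : ∀ x, |u x| ≤ M) (x : E) :
    |dppAverage μ a b ε u x| ≤ M := by
  have h₁ := dppAverage_le_add_const μ ha hb hab hε hM (v := fun _ => M) (c := 0)
    measurable_const (fun _ => (abs_of_nonneg hM).le) hm hu
    (fun y => by simpa using (abs_le.1 (hu y)).2) x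
  have h₂ := dppAverage_le_add_const μ ha hb hab hε hM (w := fun _ => -M) (c := 0)
    hm hu measurable_const (fun _ => by rw [abs_neg, abs_of_nonneg hM])
    (fun y => by simpa using (abs_le.1 (hu y)).1) x
  rw [dppAverage_const μ hab hε] at h₁ h₂
  exact abs_le.2 ⟨by linarith, by linarith⟩

section Iteration

variable {a b ε M : ℝ} {s : Set E} {g : E → ℝ}

lemma measurable_dppIterate_and_abs_le (ha : 0 ≤ a) (hb : 0 ≤ b) (hab : a + b = 1) (hε : 0 < ε)
    (hM : 0 ≤ M) (hs : MeasurableSet s) (hgm : Measurable g) (hg : ∀ x, |g x| ≤ M) (k : ℕ) :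
    Measurable (dppIterate μ a b ε M s g k) ∧ ∀ x, |dppIterate μ a b ε M s g k x| ≤ M := by
  classical
  induction k with
  | zero =>
    refine ⟨Measurable.piecewise hs measurable_const hgm, fun x => ?_⟩
    by_cases hx : x ∈ s
    · simp [dppIterate, hx, abs_of_nonneg hM]
    · rw [dppIterate_of_notMem μ 0 hx]
      exact hg x
  | succ k ih =>
    constructor
    · exact Measurable.piecewise hs (measurable_dppAverage μ hε ih.1 ih.2) hgm
    · intro x
      by_cases hx : x ∈ s
      · rw [dppIterate_succ_of_mem μ k hx]
        exact abs_dppAverage_le μ ha hb hab hε hM ih.1 ih.2 x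
      · rw [dppIterate_of_notMem μ _ hx]
        exact hg x

lemma monotone_dppIterate (ha : 0 ≤ a) (hb : 0 ≤ b) (hab : a + b = 1) (hε : 0 < ε)
    (hM : 0 ≤ M) (hs : MeasurableSet s) (hgm : Measurable g) (hg : ∀ x, |g x| ≤ M) :
    Monotone (dppIterate μ a b ε M s g) := by
  have hB := measurable_dppIterate_and_abs_le μ ha hb hab hε hM hs hgm hg
  refine monotone_nat_of_le_succ fun k => ?_
  induction k with
  | zero =>
    intro x
    by_cases hx : x ∈ s
    · have h₀ : dppIterate μ a b ε M s g 0 x = -M := by simp [dppIterate, hx]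
      rw [h₀]
      exact (abs_le.1 ((hB 1).2 x)).1
    · rw [dppIterate_of_notMem μ _ hx, dppIterate_of_notMem μ _ hx]
  | succ k ih =>
    intro x
    by_cases hx : x ∈ s
    · rw [dppIterate_succ_of_mem μ _ hx, dppIterate_succ_of_mem μ _ hx]
      simpa using dppAverage_le_add_const μ ha hb hab hε hM (hB (k + 1)).1 (hB (k + 1)).2
        (hB k).1 (hB k).2 (c := 0) (fun y => by simpa using ih y) x
    · rw [dppIterate_of_notMem μ _ hx, dppIterate_of_notMem μ _ hx]

end Iteration

/-- Existence of a bounded Borel solution of the dynamic programming principle with bounded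
Borel exterior values `g`. -/
theorem exists_eq_dppAverage {a b ε M : ℝ} {s : Set E} {g : E → ℝ} (ha : 0 ≤ a) (hb : 0 < b)
    (hab : a + b = 1) (hε : 0 < ε) (hM : 0 ≤ M) (hs : MeasurableSet s) (hsμ : μ s ≠ ⊤)
    (hgm : Measurable g) (hg : ∀ x, |g x| ≤ M) :
    ∃ u : E → ℝ, Measurable u ∧ (∀ x, |u x| ≤ M) ∧ (∀ x ∉ s, u x = g x) ∧
      ∀ x ∈ s, u x = dppAverage μ a b ε u x := by
  set U := dppIterate μ a b ε M s g with hU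
  have hB := measurable_dppIterate_and_abs_le μ ha hb.le hab hε hM hs hgm hg
  have hmono : Monotone U := monotone_dppIterate μ ha hb.le hab hε hM hs hgm hg
  rw [← hU] at hB
  have hbdd : ∀ x, BddAbove (range fun k => U k x) := fun x =>
    ⟨M, by rintro _ ⟨k, rfl⟩; exact (abs_le.1 ((hB k).2 x)).2⟩
  set u : E → ℝ := fun x => ⨆ k, U k x with hu
  have hlim : ∀ x, Tendsto (fun k => U k x) atTop (𝓝 (u x)) := fun x =>
    tendsto_atTop_ciSup (fun i j hij => hmono hij x) (hbdd x)
  have hum : Measurable u := measurable_of_tendsto_metrizable (fun k => (hB k).1)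
    (tendsto_pi_nhds.2 hlim)
  have hub : ∀ x, |u x| ≤ M := fun x =>
    le_of_tendsto (hlim x).abs (.of_forall fun k => (hB k).2 x)
  have hle : ∀ k x, U k x ≤ u x := fun k x => le_ciSup (hbdd x) k
  have hout : ∀ x ∉ s, u x = g x := fun x hx => by
    refine tendsto_nhds_unique (hlim x) ?_
    simp only [hU, dppIterate_of_notMem μ _ hx]
    exact tendsto_const_nhds
  have hdom : ∀ k x, ‖u x - U k x‖ ≤ s.indicator (fun _ => M + M) x := fun k x => by
    by_cases hx : x ∈ s
    · rw [indicator_of_mem hx]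
      exact (abs_sub _ _).trans (add_le_add (hub x) ((hB k).2 x))
    · rw [indicator_of_notMem hx, hout x hx, hU, dppIterate_of_notMem μ _ hx]
      simp
  have hdomi : Integrable (s.indicator fun _ => M + M) μ :=
    (integrable_indicator_iff hs).2 (integrableOn_const hsμ)
  have hI : Tendsto (fun k => ∫ x, (u x - U k x) ∂μ) atTop (𝓝 0) := by
    have := tendsto_integral_of_dominated_convergence (F := fun k x => u x - U k x)
      (f := fun _ => (0 : ℝ)) (μ := μ) _
      (fun k => (hum.sub (hB k).1).aestronglyMeasurable) hdomi
      (fun k => .of_forall (hdom k))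
      (.of_forall fun x => by simpa using (tendsto_const_nhds (x := u x)).sub (hlim x))
    simpa using this
  set V := μ.real (ball (0 : E) ε) with hV
  have hVpos : 0 < V :=
    ENNReal.toReal_pos (measure_ball_pos μ _ hε).ne' measure_ball_lt_top.ne
  have havg : ∀ k l x, ⨍ z in ball x ε, (U l z - U k z) ∂μ ≤
      V⁻¹ * ∫ x, (u x - U k x) ∂μ := fun k l x => by
    rw [setAverage_eq, measureReal_def, Measure.addHaar_ball_center μ x ε, smul_eq_mul,
      hV, measureReal_def]
    refine mul_le_mul_of_nonneg_left ?_ (by positivity)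
    have hi : Integrable (fun z => u z - U k z) μ :=
      hdomi.mono' (hum.sub (hB k).1).aestronglyMeasurable (.of_forall (hdom k))
    calc _ ≤ ∫ z in ball x ε, (u z - U k z) ∂μ :=
          setIntegral_mono ((integrableOn_ball_of_abs_le μ (hB l).1 (hB l).2 x ε).sub
            (integrableOn_ball_of_abs_le μ (hB k).1 (hB k).2 x ε)) hi.integrableOn
            fun z => sub_le_sub_right (hle l z) _
      _ ≤ _ := setIntegral_le_integral hi (.of_forall fun z => sub_nonneg.2 (hle k z))
  have hstep : ∀ k c, 0 ≤ c → (∀ x, u x ≤ U k x + c) →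
      ∀ x, u x ≤ U (k + 1) x + (a * c + b * (V⁻¹ * ∫ x, (u x - U k x) ∂μ)) := by
    intro k c hc hk x
    have hInn : 0 ≤ ∫ x, (u x - U k x) ∂μ :=
      integral_nonneg fun z => sub_nonneg.2 (hle k z)
    by_cases hx : x ∈ s
    · refine le_of_tendsto ((tendsto_add_atTop_iff_nat 1).2 (hlim x)) (.of_forall fun l => ?_)
      have h₁ := dppAverage_le_add μ (b := b) ha hε hM (hB k).1 (hB k).2 (hB l).1 (hB l).2
        (fun y => (hle l y).trans (hk y)) x
      have h₂ := mul_le_mul_of_nonneg_left (havg k l x) hb.le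
      simp only [hU, dppIterate_succ_of_mem μ _ hx]
      simp only [hU] at h₁ h₂
      linarith
    · rw [hout x hx, hU, dppIterate_of_notMem μ _ hx]
      have : 0 ≤ a * c + b * (V⁻¹ * ∫ x, (u x - U k x) ∂μ) := by positivity
      linarith
  have hunif : ∀ η > 0, ∃ k, ∀ x, u x ≤ U k x + η := by
    set S : Set ℝ := {c | 0 ≤ c ∧ ∃ N, ∀ k ≥ N, ∀ x, u x ≤ U k x + c} with hS
    have hSne : S.Nonempty := ⟨M + M, by positivity, 0, fun k _ x => by
      linarith [(abs_le.1 (hub x)).2, (abs_le.1 ((hB k).2 x)).1]⟩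
    have hSb : BddBelow S := ⟨0, fun c hc => hc.1⟩
    have hScontr : ∀ c ∈ S, ∀ η > 0, a * c + η ∈ S := by
      rintro c ⟨hc, N, hN⟩ η hη
      have hI' : Tendsto (fun k => b * (V⁻¹ * ∫ x, (u x - U k x) ∂μ)) atTop (𝓝 0) := by
        simpa using (hI.const_mul V⁻¹).const_mul b
      obtain ⟨K, hK⟩ := eventually_atTop.1 (hI'.eventually (gt_mem_nhds hη))
      refine ⟨by positivity, max N K + 1, fun k hk x => ?_⟩
      obtain ⟨j, rfl⟩ : ∃ j, k = j + 1 := ⟨k - 1, by omega⟩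
      have h₁ := hstep j c hc (hN j (by omega)) x
      have h₂ := hK j (by omega)
      linarith
    have hS0 : sInf S ≤ 0 := by
      by_contra! hpos
      have hη : 0 < b * sInf S / 4 := by positivity
      obtain ⟨c, hc, hlt⟩ := Real.lt_sInf_add_pos hSne hη
      have h₁ := csInf_le hSb (hScontr c hc _ hη)
      have ha1 : a ≤ 1 := by linarith
      have h₂ : a * c ≤ a * sInf S + b * sInf S / 4 := by
        have := mul_le_mul_of_nonneg_left hlt.le ha
        have := mul_le_mul_of_nonneg_right ha1 hη.le
        linarith
      have h₃ : a * sInf S + b * sInf S = sInf S := by rw [← add_mul, hab, one_mul]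
      linarith
    intro η hη
    obtain ⟨c, ⟨-, N, hN⟩, hlt⟩ := Real.lt_sInf_add_pos hSne hη
    exact ⟨N, fun x => (hN N le_rfl x).trans (by linarith)⟩
  refine ⟨u, hum, hub, hout, fun x hx => le_antisymm ?_ ?_⟩
  · refine le_of_tendsto ((tendsto_add_atTop_iff_nat 1).2 (hlim x)) (.of_forall fun l => ?_)
    have h := dppAverage_le_add_const μ ha hb.le hab hε hM hum hub (hB l).1 (hB l).2 (c := 0)
      (fun y => by simpa using hle l y) x
    simp only [hU, dppIterate_succ_of_mem μ _ hx]
    simpa using h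
  · refine le_of_forall_pos_le_add fun η hη => ?_
    obtain ⟨k, hk⟩ := hunif η hη
    have h := dppAverage_le_add_const μ ha hb.le hab hε hM (hB k).1 (hB k).2 hum hub hk x
    have h₁ := hle (k + 1) x
    simp only [hU, dppIterate_succ_of_mem μ _ hx] at h h₁
    linarith

end DynamicProgramming

/-- **Existence for the DPP.** For every bounded Borel function `F` on the boundary strip
`Γ_ε = {x ∉ Ω : dist(x, ∂Ω) ≤ ε}` there exists a bounded Borel function `u` on
`Ω_ε = Ω ∪ Γ_ε` with `u = F` on `Γ_ε` satisfying the dynamic programming principle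
`u(x) = α/(2ε) ∫₀^ε (sup_{B_t(x)} u + inf_{B_t(x)} u) dt + β ⨍_{B_ε(x)} u` for all `x ∈ Ω`,
where `α = (p-2)/(n+p)` and `β = (n+2)/(n+p)`. -/
theorem dpp_existence (n : ℕ) (hn : 2 ≤ n) (p : ℝ) (hp : 2 < p)
    (Ω : Set (EuclideanSpace ℝ (Fin n)))
    (hΩopen : IsOpen Ω) (hΩconn : IsConnected Ω) (hΩbdd : Bornology.IsBounded Ω)
    (ε : ℝ) (hε : ε ∈ Set.Ioo (0 : ℝ) 1)
    (F : EuclideanSpace ℝ (Fin n) → ℝ) (hFmeas : Measurable F)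
    (hFbdd : ∃ M, ∀ x ∈ {x | x ∉ Ω ∧ Metric.infDist x (frontier Ω) ≤ ε}, |F x| ≤ M) :
    ∃ u : EuclideanSpace ℝ (Fin n) → ℝ,
      Measurable u ∧
      (∃ M, ∀ x ∈ Ω ∪ {x | x ∉ Ω ∧ Metric.infDist x (frontier Ω) ≤ ε}, |u x| ≤ M) ∧
      (∀ x ∈ {x | x ∉ Ω ∧ Metric.infDist x (frontier Ω) ≤ ε}, u x = F x) ∧
      (∀ x ∈ Ω, u x =
        ((p - 2) / (n + p)) / (2 * ε) *
            (∫ t in (0 : ℝ)..ε, (sSup (u '' Metric.ball x t) + sInf (u '' Metric.ball x t)))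
          + ((n + 2) / (n + p)) * ⨍ z in Metric.ball x ε, u z) := by
  obtain ⟨M, hM⟩ := hFbdd
  set Γ : Set (EuclideanSpace ℝ (Fin n)) :=
    {x | x ∉ Ω ∧ Metric.infDist x (frontier Ω) ≤ ε} with hΓ
  have hΓm : MeasurableSet Γ := hΩopen.measurableSet.compl.inter
    (isClosed_le (continuous_infDist_pt _) continuous_const).measurableSet
  have hnp : (0 : ℝ) < n + p := by positivity
  obtain ⟨u, hum, hub, hout, hin⟩ := exists_eq_dppAverage
    (volume : Measure (EuclideanSpace ℝ (Fin n)))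
    (a := (p - 2) / (n + p)) (b := (n + 2) / (n + p)) (M := max M 0) (g := Γ.indicator F)
    (div_nonneg (by linarith) hnp.le) (by positivity) (by field_simp; ring) hε.1
    (le_max_right _ _) hΩopen.measurableSet hΩbdd.measure_lt_top.ne (hFmeas.indicator hΓm)
    (fun x => by
      by_cases hx : x ∈ Γ
      · rw [indicator_of_mem hx]
        exact (hM x hx).trans (le_max_left _ _)
      · simp [indicator_of_notMem hx])
  exact ⟨u, hum, ⟨_, fun x _ => hub x⟩,
    fun x hx => by rw [hout x hx.1, indicator_of_mem hx], hin⟩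
end

section
/- Rough Lipschitz estimate (Lemma 3.1): for every p > 2, integer n ≥ 2, r > 0 and M ≥ 0 there exists a constant C > 0 (depending only on p, n, r and M) such that the following holds. Let ε ∈ (0,1) with ε < r, let F : Γ_ε → ℝ be bounded Borel with sup_{Γ_ε}|F| ≤ M, and let u be a bounded Borel function on Ω_ε satisfying the DPP at every point of Ω with u = F on Γ_ε. Then for every z₀ with B_{6r}(z₀) ⊂ Ω and all x, y ∈ B_r(z₀): |u(x) − u(y)| ≤ C|x − y| + Cε. -/
open MeasureTheory Metric Set

lemma sSup_image_neg {X : Type*} (u : X → ℝ) (s : Set X) :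
    sSup ((fun y ↦ -u y) '' s) = -sInf (u '' s) := by
  rw [← Real.sSup_neg, ← Set.image_neg_eq_neg, image_image]

lemma sInf_image_neg {X : Type*} (u : X → ℝ) (s : Set X) :
    sInf ((fun y ↦ -u y) '' s) = -sSup (u '' s) := by
  rw [← Real.sInf_neg, ← Set.image_neg_eq_neg, image_image]

section TugOfWar

variable {E : Type*} [PseudoMetricSpace E]

/-- The integrated tug-of-war term `∫₀^ε (sup_{B_t(x)} u + inf_{B_t(x)} u) dt`. -/
noncomputable def tugIntegral (ε : ℝ) (u : E → ℝ) (x : E) : ℝ :=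
  ∫ t in (0 : ℝ)..ε, (sSup (u '' ball x t) + sInf (u '' ball x t))

lemma intervalIntegrable_sSup_image_ball {u : E → ℝ} {x : E} {ε M : ℝ} (hε : 0 < ε)
    (hu : ∀ y ∈ ball x ε, |u y| ≤ M) :
    IntervalIntegrable (fun t ↦ sSup (u '' ball x t)) volume 0 ε := by
  rw [intervalIntegrable_iff_integrableOn_Ioc_of_le hε.le]
  have hbdd : ∀ t ≤ ε, BddAbove (u '' ball x t) := by
    rintro t ht
    refine ⟨M, ?_⟩
    rintro _ ⟨y, hy, rfl⟩
    exact (abs_le.1 (hu y (ball_subset_ball ht hy))).2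
  have hmono : MonotoneOn (fun t ↦ sSup (u '' ball x t)) (Ioc 0 ε) := by
    intro s hs t ht hst
    exact csSup_le_csSup (hbdd t ht.2) ⟨u x, x, mem_ball_self hs.1, rfl⟩
      (image_mono (ball_subset_ball hst))
  refine Integrable.of_bound (aemeasurable_restrict_of_monotoneOn measurableSet_Ioc
    hmono).aestronglyMeasurable M ?_
  filter_upwards [ae_restrict_mem measurableSet_Ioc] with t ht
  rw [Real.norm_eq_abs, abs_le]
  constructor
  · exact (abs_le.1 (hu x (mem_ball_self hε))).1.trans
      (le_csSup (hbdd t ht.2) ⟨x, mem_ball_self ht.1, rfl⟩)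
  · refine csSup_le ⟨u x, x, mem_ball_self ht.1, rfl⟩ ?_
    rintro _ ⟨y, hy, rfl⟩
    exact (abs_le.1 (hu y (ball_subset_ball ht.2 hy))).2

lemma intervalIntegrable_sInf_image_ball {u : E → ℝ} {x : E} {ε M : ℝ} (hε : 0 < ε)
    (hu : ∀ y ∈ ball x ε, |u y| ≤ M) :
    IntervalIntegrable (fun t ↦ sInf (u '' ball x t)) volume 0 ε := by
  have h := (intervalIntegrable_sSup_image_ball (u := fun y ↦ -u y) (M := M) hε
    (by simpa using hu)).neg
  refine h.congr (fun t _ ↦ ?_)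
  simp [sSup_image_neg]

lemma tugIntegral_neg (ε : ℝ) (u : E → ℝ) (x : E) :
    tugIntegral ε (fun y ↦ -u y) x = -tugIntegral ε u x := by
  simp only [tugIntegral, sSup_image_neg, sInf_image_neg, ← intervalIntegral.integral_neg]
  congr 1
  ext t
  ring

lemma tugIntegral_zero (ε : ℝ) (x : E) : tugIntegral ε (fun _ : E ↦ (0 : ℝ)) x = 0 := by
  have h := tugIntegral_neg ε (fun _ : E ↦ (0 : ℝ)) x
  simp only [neg_zero] at h
  linarith

/-- Pairwise comparison for tug-of-war terms: a bound for one pair of moves plus every lower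
bound `I` for the other pair of moves controls the difference of the two terms. -/
lemma tugIntegral_sub_le {u v : E → ℝ} {x z : E} {ε M : ℝ} (hε : 0 < ε)
    (hu : ∀ y ∈ ball x ε, |u y| ≤ M) (hv : ∀ y ∈ ball z ε, |v y| ≤ M)
    {G : ℝ → ℝ} (hG : Continuous G)
    (h : ∀ t ∈ Ioo 0 ε, ∀ a ∈ ball x t, ∀ b ∈ ball z t, ∀ I : ℝ,
      (∀ a' ∈ ball x t, ∀ b' ∈ ball z t, I ≤ u a' - v b') → u a - v b + I ≤ G t) :
    tugIntegral ε u x - tugIntegral ε v z ≤ ∫ t in (0 : ℝ)..ε, G t := by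
  have hiu := (intervalIntegrable_sSup_image_ball hε hu).add
    (intervalIntegrable_sInf_image_ball hε hu)
  have hiv := (intervalIntegrable_sSup_image_ball hε hv).add
    (intervalIntegrable_sInf_image_ball hε hv)
  unfold tugIntegral
  rw [← intervalIntegral.integral_sub hiu hiv]
  refine intervalIntegral.integral_mono_on_of_le_Ioo hε.le (hiu.sub hiv)
    (hG.intervalIntegrable _ _) ?_
  intro t ht
  have bound : ∀ {w : E → ℝ} {y : E}, (∀ y' ∈ ball y ε, |w y'| ≤ M) →
      BddAbove (w '' ball y t) ∧ BddBelow (w '' ball y t) ∧ (w '' ball y t).Nonempty := by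
    intro w y hw
    refine ⟨⟨M, ?_⟩, ⟨-M, ?_⟩, ⟨w y, y, mem_ball_self ht.1, rfl⟩⟩
    · rintro _ ⟨y', hy', rfl⟩
      exact (abs_le.1 (hw y' (ball_subset_ball ht.2.le hy'))).2
    · rintro _ ⟨y', hy', rfl⟩
      exact (abs_le.1 (hw y' (ball_subset_ball ht.2.le hy'))).1
  obtain ⟨hua, hub, hun⟩ := bound hu
  obtain ⟨hva, hvb, hvn⟩ := bound hv
  set I := sInf (u '' ball x t) - sSup (v '' ball z t) with hI
  have hI' : ∀ a' ∈ ball x t, ∀ b' ∈ ball z t, I ≤ u a' - v b' := fun a' ha' b' hb' ↦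
    sub_le_sub (csInf_le hub ⟨a', ha', rfl⟩) (le_csSup hva ⟨b', hb', rfl⟩)
  have key : sSup (u '' ball x t) ≤ G t - I + sInf (v '' ball z t) := by
    refine csSup_le hun ?_
    rintro _ ⟨a, ha, rfl⟩
    have : u a - (G t - I) ≤ sInf (v '' ball z t) := by
      refine le_csInf hvn ?_
      rintro _ ⟨b, hb, rfl⟩
      linarith [h t ht a ha b hb I hI']
    linarith
  change sSup (u '' ball x t) + sInf (u '' ball x t)
    - (sSup (v '' ball z t) + sInf (v '' ball z t)) ≤ G t
  linarith

end TugOfWar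

section Average

variable {E : Type*} [NormedAddCommGroup E] [MeasurableSpace E] [BorelSpace E]
  (μ : Measure E) [μ.IsAddHaarMeasure]

lemma setAverage_ball_eq_add (u : E → ℝ) (x : E) (ε : ℝ) :
    ⨍ z in ball x ε, u z ∂μ = ⨍ h in ball (0 : E) ε, u (x + h) ∂μ := by
  rw [setAverage_eq, setAverage_eq, measureReal_def, measureReal_def,
    Measure.addHaar_ball_center μ x ε,
    ← (measurePreserving_add_left μ x).setIntegral_preimage_emb
      (measurableEmbedding_addLeft x) u (ball x ε)]
  simp

variable [NormedSpace ℝ E] [FiniteDimensional ℝ E]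

lemma setAverage_ball_zero_le {g : E → ℝ} {ε M c : ℝ} (hε : 0 < ε) (hg : Measurable g)
    (hgM : ∀ h ∈ ball (0 : E) ε, |g h| ≤ M)
    (hc : ∀ h ∈ ball (0 : E) ε, g h + g (-h) ≤ 2 * c) :
    ⨍ h in ball (0 : E) ε, g h ∂μ ≤ c := by
  have hneg : ∀ {h : E}, h ∈ ball (0 : E) ε → -h ∈ ball (0 : E) ε := by
    intro h hh
    simpa using hh
  have hint : ∀ {f : E → ℝ}, Measurable f → (∀ h ∈ ball (0 : E) ε, |f h| ≤ M) →
      IntegrableOn f (ball (0 : E) ε) μ := by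
    intro f hf hfM
    refine Measure.integrableOn_of_bounded (M := M) measure_ball_lt_top.ne
      hf.aestronglyMeasurable ?_
    filter_upwards [ae_restrict_mem measurableSet_ball] with h hh using hfM h hh
  have hsymm : ∫ h in ball (0 : E) ε, g (-h) ∂μ = ∫ h in ball (0 : E) ε, g h ∂μ := by
    rw [← (Measure.measurePreserving_neg μ).setIntegral_preimage_emb
      (MeasurableEquiv.neg E).measurableEmbedding g (ball (0 : E) ε)]
    simp
  have hi := hint hg hgM
  have hi' : IntegrableOn (fun h ↦ g (-h)) (ball (0 : E) ε) μ :=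
    hint (hg.comp measurable_neg) (fun h hh ↦ hgM _ (hneg hh))
  have hsum : ∫ h in ball (0 : E) ε, (g h + g (-h)) ∂μ
      ≤ ∫ _ in ball (0 : E) ε, (2 * c) ∂μ :=
    setIntegral_mono_on (hi.add hi') (integrableOn_const measure_ball_lt_top.ne)
      measurableSet_ball hc
  rw [integral_add hi hi', hsymm, setIntegral_const, smul_eq_mul] at hsum
  have hpos : 0 < μ.real (ball (0 : E) ε) :=
    ENNReal.toReal_pos (measure_ball_pos μ 0 hε).ne' measure_ball_lt_top.ne
  rw [setAverage_eq, smul_eq_mul, inv_mul_le_iff₀ hpos]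
  linarith

/-- Comparison of averages at two points under the parallel coupling `h ↦ (x + h, z + h)`,
symmetrized in `h`. -/
lemma setAverage_ball_sub_le {u v : E → ℝ} {x z : E} {ε M c : ℝ} (hε : 0 < ε)
    (hu : Measurable u) (hv : Measurable v)
    (huM : ∀ y ∈ ball x ε, |u y| ≤ M) (hvM : ∀ y ∈ ball z ε, |v y| ≤ M)
    (hc : ∀ h ∈ ball (0 : E) ε,
      (u (x + h) - v (z + h)) + (u (x - h) - v (z - h)) ≤ 2 * c) :
    ⨍ y in ball x ε, u y ∂μ - ⨍ y in ball z ε, v y ∂μ ≤ c := by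
  have hmem : ∀ (y : E) {h : E}, h ∈ ball (0 : E) ε → y + h ∈ ball y ε := by
    intro y h hh
    simpa using hh
  have hbd : ∀ h ∈ ball (0 : E) ε, |u (x + h) - v (z + h)| ≤ 2 * M := by
    intro h hh
    have h1 := huM _ (hmem x hh)
    have h2 := hvM _ (hmem z hh)
    rw [abs_le] at *
    constructor <;> linarith
  have hint : ∀ {w : E → ℝ} {y : E}, Measurable w → (∀ y' ∈ ball y ε, |w y'| ≤ M) →
      IntegrableOn (fun h ↦ w (y + h)) (ball (0 : E) ε) μ := by
    intro w y hw hwM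
    refine Measure.integrableOn_of_bounded (M := M) measure_ball_lt_top.ne
      (hw.comp (measurable_const_add y)).aestronglyMeasurable ?_
    filter_upwards [ae_restrict_mem measurableSet_ball] with h hh using hwM _ (hmem y hh)
  have key := setAverage_ball_zero_le μ (g := fun h ↦ u (x + h) - v (z + h)) hε
    ((hu.comp (measurable_const_add x)).sub (hv.comp (measurable_const_add z))) hbd
    (by simpa only [← sub_eq_add_neg] using hc)
  rw [setAverage_ball_eq_add μ u, setAverage_ball_eq_add μ v]
  rw [setAverage_eq, integral_sub (hint hu huM) (hint hv hvM), smul_sub] at key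
  rwa [setAverage_eq, setAverage_eq]

end Average

/-- A property that improves by a fixed amount `δ` down to the threshold `K₀` holds at `K₀`. -/
lemma of_forall_max_sub {P : ℝ → Prop} {K K₀ δ : ℝ} (hδ : 0 < δ) (hK : P (max K K₀))
    (h : ∀ L, K₀ ≤ L → P L → P (max (L - δ) K₀)) : P K₀ := by
  have key : ∀ k : ℕ, P (max (K - k * δ) K₀) := by
    intro k
    induction k with
    | zero => simpa using hK
    | succ k ih =>
      have := h _ (le_max_right _ _) ih
      rwa [← max_sub_sub_right, max_assoc, max_eq_right (by linarith : K₀ - δ ≤ K₀),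
        show K - k * δ - δ = K - (k + 1 : ℕ) * δ by push_cast; ring] at this
  obtain ⟨k, hk⟩ := exists_nat_gt ((K - K₀) / δ)
  rw [div_lt_iff₀ hδ] at hk
  have := key k
  rwa [max_eq_right (by linarith)] at this

lemma integral_quadratic (a b c ε : ℝ) :
    ∫ t in (0 : ℝ)..ε, (c + b * t - a * t ^ 2) = c * ε + b * ε ^ 2 / 2 - a * ε ^ 3 / 3 := by
  have h : ∀ t ∈ uIcc 0 ε, HasDerivAt (fun t : ℝ ↦ c * t + b * t ^ 2 / 2 - a * t ^ 3 / 3)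
      (c + b * t - a * t ^ 2) t := by
    intro t _
    have h1 := (((hasDerivAt_id t).const_mul c).add
      (((hasDerivAt_pow 2 t).const_mul b).div_const 2)).sub
      (((hasDerivAt_pow 3 t).const_mul a).div_const 3)
    refine h1.congr_deriv ?_
    norm_num
    ring
  rw [intervalIntegral.integral_eq_sub_of_hasDerivAt h
    (Continuous.intervalIntegrable (by fun_prop) _ _)]
  ring

lemma ball_subset_union_of_mem {E : Type*} [NormedAddCommGroup E] [NormedSpace ℝ E]
    [FiniteDimensional ℝ E] {Ω : Set E} {ε : ℝ} {x : E} (hx : x ∈ Ω) :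
    ball x ε ⊆ Ω ∪ {x | x ∉ Ω ∧ infDist x (frontier Ω) ≤ ε} := by
  intro z hz
  by_cases hzΩ : z ∈ Ω
  · exact Or.inl hzΩ
  · refine Or.inr ⟨hzΩ, ?_⟩
    obtain ⟨y, hy, hyd⟩ := exists_mem_frontier_infDist_compl_eq_dist (s := Ωᶜ) hzΩ
      (by simpa using Set.Nonempty.ne_empty ⟨x, hx⟩)
    rw [frontier_compl] at hy
    rw [compl_compl] at hyd
    calc infDist z (frontier Ω) ≤ dist z y := infDist_le_dist_of_mem hy
      _ = infDist z Ω := hyd.symm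
      _ ≤ dist z x := infDist_le_dist_of_mem hx
      _ ≤ ε := (mem_ball.1 hz).le

section DPP

variable {E : Type*} [NormedAddCommGroup E] [MeasurableSpace E]

/-- The dynamic programming principle with weights `α`, `β` at the point `x`. -/
def SatisfiesDPP (μ : Measure E) (α β ε : ℝ) (u : E → ℝ) (x : E) : Prop :=
  u x = α / (2 * ε) * tugIntegral ε u x + β * ⨍ z in ball x ε, u z ∂μ

variable {μ : Measure E}

lemma SatisfiesDPP.neg {α β ε : ℝ} {u : E → ℝ} {x : E} (h : SatisfiesDPP μ α β ε u x) :
    SatisfiesDPP μ α β ε (fun y ↦ -u y) x := by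
  unfold SatisfiesDPP at *
  simp only [tugIntegral_neg, setAverage_eq, integral_neg, smul_eq_mul] at *
  linarith

variable [InnerProductSpace ℝ E] [FiniteDimensional ℝ E] [BorelSpace E] [μ.IsAddHaarMeasure]

lemma SatisfiesDPP.add_sq_norm_le [Nontrivial E] {α β ε η κ M : ℝ} {u : E → ℝ} {x : E}
    (hα : 0 ≤ α) (hβ : 0 ≤ β) (hαβ : α + β = 1) (hε : 0 < ε) (hη : 0 < η) (hu : Measurable u)
    (huM : ∀ y ∈ ball x ε, |u y| ≤ M) (h : SatisfiesDPP μ α β ε u x)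
    (hκ : ∀ y ∈ ball x ε, u y + η * ‖y‖ ^ 2 ≤ κ) :
    u x + η * ‖x‖ ^ 2 ≤ κ - η * α * ε ^ 2 / 6 := by
  have hM : 0 ≤ M := (abs_nonneg _).trans (huM x (mem_ball_self hε))
  obtain ⟨e, he, hxe⟩ : ∃ e : E, ‖e‖ = 1 ∧ x = ‖x‖ • e := by
    rcases eq_or_ne x 0 with rfl | hx
    · obtain ⟨e, he⟩ := exists_norm_eq E zero_le_one
      exact ⟨e, he, by simp⟩
    · refine ⟨‖x‖⁻¹ • x, norm_smul_inv_norm hx, ?_⟩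
      rw [smul_smul, mul_inv_cancel₀ (norm_ne_zero_iff.2 hx), one_smul]
  have htug := tugIntegral_sub_le (u := u) (v := fun _ : E ↦ 0) (x := x) (z := x) (M := M)
    (G := fun t ↦ 2 * (κ - η * ‖x‖ ^ 2) + 0 * t - η * t ^ 2) hε huM (by simpa using fun _ _ ↦ hM)
    (by fun_prop) (by
      intro t ht a ha _ _ I hI
      have h1 : ‖x‖ ^ 2 - 2 * t * ‖x‖ ≤ ‖a‖ ^ 2 := by
        have : ‖x‖ - ‖a‖ ≤ t := (norm_sub_norm_le x a).trans (by
          rw [← dist_eq_norm, dist_comm]; exact (mem_ball.1 ha).le)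
        rcases le_total ‖x‖ t with hxt | hxt
        · nlinarith [norm_nonneg x, norm_nonneg a]
        · nlinarith [pow_le_pow_left₀ (sub_nonneg.2 hxt) (by linarith : ‖x‖ - t ≤ ‖a‖) 2,
            sq_nonneg t]
      have h2 : I ≤ κ - η * (‖x‖ + t) ^ 2 := by
        have hlim : Filter.Tendsto (fun s : ℝ ↦ κ - η * (‖x‖ + s) ^ 2) (nhdsWithin t (Iio t))
            (nhds (κ - η * (‖x‖ + t) ^ 2)) := by
          refine Filter.Tendsto.mono_left (Continuous.tendsto ?_ t) nhdsWithin_le_nhds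
          fun_prop
        refine ge_of_tendsto hlim ?_
        filter_upwards [Ioo_mem_nhdsLT ht.1] with s hs
        have hmem : x + s • e ∈ ball x t := by
          rw [mem_ball, dist_eq_norm, add_sub_cancel_left, norm_smul, he, mul_one,
            Real.norm_eq_abs, abs_of_pos hs.1]
          exact hs.2
        have hn : ‖x + s • e‖ = ‖x‖ + s := by
          nth_rw 1 [hxe]
          rw [← add_smul, norm_smul, he, mul_one, Real.norm_eq_abs,
            abs_of_nonneg (add_nonneg (norm_nonneg x) hs.1.le)]
        have h3 := hI _ hmem x (mem_ball_self ht.1)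
        have h4 := hκ _ (ball_subset_ball ht.2.le hmem)
        rw [hn] at h4
        linarith
      have h5 := hκ a (ball_subset_ball ht.2.le ha)
      nlinarith [mul_le_mul_of_nonneg_left h1 hη.le])
  have havg := setAverage_ball_sub_le μ (u := u) (v := fun _ : E ↦ 0) (x := x) (z := x) (M := M)
    (c := κ - η * ‖x‖ ^ 2) hε hu measurable_const huM (by simpa using fun _ _ ↦ hM) (by
      intro k hk
      have h1 := hκ (x + k) (by simpa using hk)
      have h2 := hκ (x - k) (by simpa [dist_eq_norm] using hk)
      have h3 := parallelogram_law_with_norm ℝ x k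
      nlinarith [sq_nonneg ‖k‖])
  rw [integral_quadratic, tugIntegral_zero, sub_zero] at htug
  simp only [setAverage_eq, integral_zero, smul_zero, sub_zero] at havg
  unfold SatisfiesDPP at h
  rw [setAverage_eq] at h
  have e1 := mul_le_mul_of_nonneg_left htug (by positivity : 0 ≤ α / (2 * ε))
  have e2 := mul_le_mul_of_nonneg_left havg hβ
  have e3 : α / (2 * ε) * (2 * (κ - η * ‖x‖ ^ 2) * ε + 0 * ε ^ 2 / 2 - η * ε ^ 3 / 3)
      = α * (κ - η * ‖x‖ ^ 2) - η * α * ε ^ 2 / 6 := by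
    field_simp
    ring
  have e4 : β = 1 - α := by linarith
  rw [e4] at h e2
  linarith

/-- The maximum principle for solutions of the dynamic programming principle. -/
lemma SatisfiesDPP.le_of_le_boundary [Nontrivial E] {α β ε M M' : ℝ} {u : E → ℝ} {Ω Γ : Set E}
    (hα : 0 < α) (hβ : 0 ≤ β) (hαβ : α + β = 1) (hε : 0 < ε) (hu : Measurable u)
    (hbdd : Bornology.IsBounded (Ω ∪ Γ)) (hball : ∀ x ∈ Ω, ball x ε ⊆ Ω ∪ Γ)
    (huM' : ∀ y ∈ Ω ∪ Γ, |u y| ≤ M') (hM : ∀ y ∈ Γ, u y ≤ M)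
    (h : ∀ x ∈ Ω, SatisfiesDPP μ α β ε u x) : ∀ y ∈ Ω ∪ Γ, u y ≤ M := by
  obtain ⟨B, hB⟩ := hbdd.exists_norm_le
  have hsq : ∀ y ∈ Ω ∪ Γ, ‖y‖ ^ 2 ≤ B ^ 2 := fun y hy ↦
    pow_le_pow_left₀ (norm_nonneg y) (hB y hy) 2
  have main : ∀ η > 0, ∀ y ∈ Ω ∪ Γ, u y + η * ‖y‖ ^ 2 ≤ M + η * B ^ 2 := by
    intro η hη
    refine of_forall_max_sub (P := fun κ ↦ ∀ y ∈ Ω ∪ Γ, u y + η * ‖y‖ ^ 2 ≤ κ)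
      (K := M' + η * B ^ 2) (δ := η * α * ε ^ 2 / 6) (by positivity) ?_ ?_
    · intro y hy
      refine le_max_of_le_left ?_
      have := mul_le_mul_of_nonneg_left (hsq y hy) hη.le
      linarith [(abs_le.1 (huM' y hy)).2]
    · intro κ _ hκ y hy
      rcases hy with hy | hy
      · exact le_max_of_le_left ((h y hy).add_sq_norm_le hα.le hβ hαβ hε hη hu
          (fun z hz ↦ huM' z (hball y hy hz)) (fun z hz ↦ hκ z (hball y hy hz)))
      · refine le_max_of_le_right ?_
        have := mul_le_mul_of_nonneg_left (hsq y (Or.inr hy)) hη.le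
        linarith [hM y hy]
  intro y hy
  refine le_of_forall_pos_le_add fun θ hθ ↦ ?_
  have hB' : 0 < B ^ 2 + 1 := by positivity
  have h1 := main (θ / (B ^ 2 + 1)) (by positivity) y hy
  have h2 : θ / (B ^ 2 + 1) * B ^ 2 ≤ θ := by
    rw [div_mul_eq_mul_div, div_le_iff₀ hB']
    nlinarith
  have h3 : 0 ≤ θ / (B ^ 2 + 1) * ‖y‖ ^ 2 := by positivity
  linarith

end DPP

/-- The concave gauge `σ ↦ σ - σ ^ (3/2)`. -/
noncomputable def concaveGauge (σ : ℝ) : ℝ := σ - σ * √σ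

lemma continuous_concaveGauge : Continuous concaveGauge := by
  unfold concaveGauge
  fun_prop

lemma concaveGauge_sq {q : ℝ} (hq : 0 ≤ q) : concaveGauge (q ^ 2) = q ^ 2 - q ^ 3 := by
  rw [concaveGauge, Real.sqrt_sq hq]
  ring

lemma concaveGauge_le_self {σ : ℝ} (hσ : 0 ≤ σ) : concaveGauge σ ≤ σ := by
  rw [concaveGauge]
  linarith [mul_nonneg hσ (Real.sqrt_nonneg σ)]

lemma concaveGauge_mono {a b : ℝ} (ha : 0 ≤ a) (hab : a ≤ b) (hb : b ≤ 4 / 9) :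
    concaveGauge a ≤ concaveGauge b := by
  have hp := Real.sqrt_nonneg a
  have hpr := Real.sqrt_le_sqrt hab
  have hr : √b ≤ 2 / 3 := by
    rw [Real.sqrt_le_left (by norm_num)]
    linarith
  rw [← Real.sq_sqrt ha, ← Real.sq_sqrt (ha.trans hab), concaveGauge_sq hp,
    concaveGauge_sq (hp.trans hpr)]
  generalize √a = p at *
  generalize √b = r at *
  have h : 0 ≤ (r - p) * (r + p - r ^ 2 - r * p - p ^ 2) := by
    apply mul_nonneg <;> nlinarith
  linarith

lemma concaveGauge_nonneg {σ : ℝ} (h0 : 0 ≤ σ) (h1 : σ ≤ 4 / 9) : 0 ≤ concaveGauge σ := by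
  simpa [concaveGauge] using concaveGauge_mono le_rfl h0 h1

/-- Quantitative concavity of the gauge. -/
lemma concaveGauge_le_tangent {q τ : ℝ} (hq : 0 < q) (h0 : 0 ≤ τ) (h4 : τ ≤ 4 * q ^ 2) :
    concaveGauge τ ≤ concaveGauge (q ^ 2) + (1 - 3 / 2 * q) * (τ - q ^ 2)
      - (τ - q ^ 2) ^ 2 / (4 * q) := by
  have hw := Real.sqrt_nonneg τ
  have hw2 : √τ ≤ 2 * q := by
    rw [Real.sqrt_le_left (by positivity)]
    linarith
  rw [← Real.sq_sqrt h0, concaveGauge_sq hw, concaveGauge_sq hq.le]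
  generalize √τ = w at *
  have h : (w ^ 2 - q ^ 2) ^ 2 / (4 * q) ≤ (w - q) ^ 2 * (w + q / 2) := by
    rw [div_le_iff₀ (by positivity)]
    have h1 : (w + q) ^ 2 ≤ (w + q / 2) * (4 * q) := by nlinarith
    nlinarith [mul_le_mul_of_nonneg_left h1 (sq_nonneg (w - q))]
  linarith

section GaugeEstimates

variable {q τ κ₁ κ₂ p₁ p₂ : ℝ}

lemma div_one_add_mem {p κ : ℝ} (hτq : 2 * τ ≤ q ^ 2) (hq1 : q ≤ 1 / 4096) (hq : 0 < q)
    (hκ : |κ| ≤ τ) (hp : |p| ≤ 2 * τ) :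
    0 ≤ (q ^ 2 + p) / (1 + κ) ∧ (q ^ 2 + p) / (1 + κ) ≤ 4 * q ^ 2 := by
  rw [abs_le] at *
  have hτ : τ ≤ 1 / 4 := by nlinarith
  have h1 : 0 < 1 + κ := by linarith
  constructor
  · exact div_nonneg (by linarith) h1.le
  · rw [div_le_iff₀ h1]
    nlinarith

lemma add_div_one_add_le {P B : ℝ} (hτ : 0 ≤ τ) (hτ4 : τ ≤ 1 / 4) (hP : 0 ≤ P) (hB : 0 ≤ B)
    (h₁ : |κ₁| ≤ τ) (h₂ : |κ₂| ≤ τ) (hlo : -τ ^ 2 ≤ κ₁ + κ₂)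
    (hp₁ : |p₁| ≤ P) (hp₂ : |p₂| ≤ P) (hp : p₁ + p₂ ≤ B) :
    (q ^ 2 + p₁) / (1 + κ₁) + (q ^ 2 + p₂) / (1 + κ₂)
      ≤ 2 * q ^ 2 + 2 * (B + 2 * P * τ + 3 * q ^ 2 * τ ^ 2) := by
  have a1 : |κ₁ * κ₂| ≤ τ * τ := by
    rw [abs_mul]; exact mul_le_mul h₁ h₂ (abs_nonneg _) hτ
  have a2 : |p₁ * κ₂| ≤ P * τ := by
    rw [abs_mul]; exact mul_le_mul hp₁ h₂ (abs_nonneg _) hP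
  have a3 : |p₂ * κ₁| ≤ P * τ := by
    rw [abs_mul]; exact mul_le_mul hp₂ h₁ (abs_nonneg _) hP
  rw [abs_le] at *
  have k1 : 0 < 1 + κ₁ := by linarith
  have k2 : 0 < 1 + κ₂ := by linarith
  have hQ : 1 / 2 ≤ (1 + κ₁) * (1 + κ₂) := by nlinarith
  rw [div_add_div _ _ k1.ne' k2.ne', div_le_iff₀ (mul_pos k1 k2)]
  set X := B + 2 * P * τ + 3 * q ^ 2 * τ ^ 2 with hX
  have hX0 : 0 ≤ X := by positivity
  have e1 : X ≤ 2 * X * ((1 + κ₁) * (1 + κ₂)) := by nlinarith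
  have e2 : (q ^ 2 + p₁) * (1 + κ₂) + (1 + κ₁) * (q ^ 2 + p₂)
      - 2 * q ^ 2 * ((1 + κ₁) * (1 + κ₂))
      = q ^ 2 * (-(κ₁ + κ₂)) + (p₁ + p₂) + p₁ * κ₂ + p₂ * κ₁ - 2 * q ^ 2 * (κ₁ * κ₂) := by
    ring
  have e3 : q ^ 2 * (-(κ₁ + κ₂)) ≤ q ^ 2 * τ ^ 2 :=
    mul_le_mul_of_nonneg_left (by linarith) (sq_nonneg q)
  have e4 : q ^ 2 * (-(κ₁ * κ₂)) ≤ q ^ 2 * τ ^ 2 :=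
    mul_le_mul_of_nonneg_left (by linarith) (sq_nonneg q)
  linarith

lemma concaveGauge_parallel_le (hq : 0 < q) (hq1 : q ≤ 1 / 4096) (hτ : 0 ≤ τ)
    (hτq : 2 * τ ≤ q ^ 2) (h₁ : |κ₁| ≤ τ) (h₂ : |κ₂| ≤ τ) (hlo : -τ ^ 2 ≤ κ₁ + κ₂) :
    concaveGauge (q ^ 2 / (1 + κ₁)) + concaveGauge (q ^ 2 / (1 + κ₂))
      ≤ 2 * concaveGauge (q ^ 2) + 6 * q ^ 2 * τ ^ 2 := by
  have hτ4 : τ ≤ 1 / 4 := by nlinarith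
  have hz : |(0 : ℝ)| ≤ 2 * τ := by simpa using hτ
  obtain ⟨l1, r1⟩ := div_one_add_mem hτq hq1 hq h₁ hz
  obtain ⟨l2, r2⟩ := div_one_add_mem hτq hq1 hq h₂ hz
  have hs := add_div_one_add_le (q := q) (p₁ := 0) (p₂ := 0) (P := 0) (B := 0) hτ hτ4 le_rfl
    le_rfl h₁ h₂ hlo (by simp) (by simp) (by simp)
  simp only [add_zero] at l1 r1 l2 r2 hs
  have t1 := concaveGauge_le_tangent hq l1 r1
  have t2 := concaveGauge_le_tangent hq l2 r2
  have g1 : 0 ≤ (q ^ 2 / (1 + κ₁) - q ^ 2) ^ 2 / (4 * q) := by positivity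
  have g2 : 0 ≤ (q ^ 2 / (1 + κ₂) - q ^ 2) ^ 2 / (4 * q) := by positivity
  generalize q ^ 2 / (1 + κ₁) = σ₁ at *
  generalize q ^ 2 / (1 + κ₂) = σ₂ at *
  have hl : (1 - 3 / 2 * q) * (σ₁ + σ₂ - 2 * q ^ 2) ≤ 6 * q ^ 2 * τ ^ 2 := by
    have : (1 - 3 / 2 * q) * (σ₁ + σ₂ - 2 * q ^ 2) ≤ (1 - 3 / 2 * q) * (6 * q ^ 2 * τ ^ 2) :=
      mul_le_mul_of_nonneg_left (by linarith) (by linarith)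
    have h0 : 0 ≤ 6 * q ^ 2 * τ ^ 2 := by positivity
    nlinarith
  linarith

lemma sq_le_sq_sub_div_one_add (hq : 0 < q) (hq1 : q ≤ 1 / 4096) (hτ : 0 ≤ τ)
    (hτq : 2 * τ ≤ q ^ 2) (h₁ : |κ₁| ≤ τ) (h₂ : |κ₂| ≤ τ) (h₁₂ : |κ₁ - κ₂| ≤ τ)
    (hp₁ : |p₁| ≤ 2 * τ) (hp₂ : |p₂| ≤ 2 * τ) (hpp : 12 * τ ^ 2 ≤ (p₁ - p₂) ^ 2) :
    τ ^ 2 ≤ ((q ^ 2 + p₁) / (1 + κ₁) - (q ^ 2 + p₂) / (1 + κ₂)) ^ 2 := by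
  have hτ4 : τ ≤ 1 / 4096 := by nlinarith
  have a1 : |κ₁ * κ₂| ≤ τ * τ := by
    rw [abs_mul]; exact mul_le_mul h₁ h₂ (abs_nonneg _) hτ
  have a2 : |p₁ * κ₂| ≤ 2 * τ * τ := by
    rw [abs_mul]; exact mul_le_mul hp₁ h₂ (abs_nonneg _) (by linarith)
  have a3 : |p₂ * κ₁| ≤ 2 * τ * τ := by
    rw [abs_mul]; exact mul_le_mul hp₂ h₁ (abs_nonneg _) (by linarith)
  have a4 : |q ^ 2 * (κ₁ - κ₂)| ≤ q ^ 2 * τ := by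
    rw [abs_mul, abs_of_nonneg (sq_nonneg q)]
    exact mul_le_mul_of_nonneg_left h₁₂ (sq_nonneg q)
  have a5 : 3 * τ ≤ |p₁ - p₂| := by
    rw [← abs_of_nonneg (by linarith : 0 ≤ 3 * τ)]
    refine sq_le_sq.1 ?_
    nlinarith
  have hq2 : q ^ 2 * τ ≤ τ / 4 := by
    have : q ^ 2 ≤ 1 / 4 := by nlinarith
    nlinarith
  have hττ : τ * τ ≤ τ / 16 := by nlinarith
  have k1 : 0 < 1 + κ₁ := by linarith [(abs_le.1 h₁).1]
  have k2 : 0 < 1 + κ₂ := by linarith [(abs_le.1 h₂).1]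
  have hQ : (1 + κ₁) * (1 + κ₂) ≤ 2 := by
    linarith [(abs_le.1 a1).2, (abs_le.1 h₁).2, (abs_le.1 h₂).2]
  have hQ0 := mul_pos k1 k2
  rw [div_sub_div _ _ k1.ne' k2.ne', ← sq_abs (_ / _), abs_div, abs_of_pos hQ0]
  refine pow_le_pow_left₀ hτ ?_ 2
  rw [le_div_iff₀ hQ0]
  have e1 : (q ^ 2 + p₁) * (1 + κ₂) - (1 + κ₁) * (q ^ 2 + p₂)
      = (p₁ - p₂) - (q ^ 2 * (κ₁ - κ₂) - p₁ * κ₂ + p₂ * κ₁) := by ring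
  have e2 : |q ^ 2 * (κ₁ - κ₂) - p₁ * κ₂ + p₂ * κ₁| ≤ τ := by
    rw [abs_le] at *
    constructor <;> linarith
  have e3 := abs_sub_abs_le_abs_sub (p₁ - p₂) (q ^ 2 * (κ₁ - κ₂) - p₁ * κ₂ + p₂ * κ₁)
  have e4 : τ * ((1 + κ₁) * (1 + κ₂)) ≤ τ * 2 := mul_le_mul_of_nonneg_left hQ hτ
  rw [e1]
  linarith

/-- Gain when the second pair of moves is opposite to the first one. -/
lemma concaveGauge_opposite_le (hq : 0 < q) (hq1 : q ≤ 1 / 4096) (hτ : 0 ≤ τ)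
    (hτq : 2 * τ ≤ q ^ 2) (h₁ : |κ₁| ≤ τ) (h₂ : |κ₂| ≤ τ) (h₁₂ : |κ₁ - κ₂| ≤ τ)
    (hlo : -τ ^ 2 ≤ κ₁ + κ₂)
    (hp₁ : |p₁| ≤ 2 * τ) (hp₂ : |p₂| ≤ 2 * τ) (hp : p₁ + p₂ ≤ τ ^ 2 / (64 * q))
    (hpp : 12 * τ ^ 2 ≤ (p₁ - p₂) ^ 2) :
    concaveGauge ((q ^ 2 + p₁) / (1 + κ₁)) + concaveGauge ((q ^ 2 + p₂) / (1 + κ₂))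
      ≤ 2 * concaveGauge (q ^ 2) - τ ^ 2 / (16 * q) := by
  have hτ4 : τ ≤ 1 / 4096 := by nlinarith
  obtain ⟨l1, r1⟩ := div_one_add_mem hτq hq1 hq h₁ hp₁
  obtain ⟨l2, r2⟩ := div_one_add_mem hτq hq1 hq h₂ hp₂
  have hs := add_div_one_add_le (q := q) hτ (by linarith : τ ≤ 1 / 4)
    (by linarith : 0 ≤ 2 * τ) (by positivity) h₁ h₂ hlo hp₁ hp₂ hp
  have t1 := concaveGauge_le_tangent hq l1 r1
  have t2 := concaveGauge_le_tangent hq l2 r2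
  have hgap := sq_le_sq_sub_div_one_add hq hq1 hτ hτq h₁ h₂ h₁₂ hp₁ hp₂ hpp
  generalize (q ^ 2 + p₁) / (1 + κ₁) = σ₁ at *
  generalize (q ^ 2 + p₂) / (1 + κ₂) = σ₂ at *
  have hg : τ ^ 2 / (8 * q) ≤ (σ₁ - q ^ 2) ^ 2 / (4 * q) + (σ₂ - q ^ 2) ^ 2 / (4 * q) := by
    rw [← add_div, div_le_div_iff₀ (by positivity) (by positivity)]
    have : τ ^ 2 ≤ 2 * ((σ₁ - q ^ 2) ^ 2 + (σ₂ - q ^ 2) ^ 2) := by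
      nlinarith [sq_nonneg (σ₁ + σ₂ - 2 * q ^ 2)]
    nlinarith
  set Y := τ ^ 2 / (64 * q) with hY
  have hY0 : 0 ≤ Y := by positivity
  have y1 : τ ^ 2 / (8 * q) = 8 * Y := by rw [hY]; field_simp; ring
  have y2 : τ ^ 2 / (16 * q) = 4 * Y := by rw [hY]; field_simp; ring
  have y3 : 14 * τ ^ 2 ≤ Y := by
    rw [hY, le_div_iff₀ (by positivity)]
    nlinarith [sq_nonneg τ]
  have hl : (1 - 3 / 2 * q) * (σ₁ + σ₂ - 2 * q ^ 2) ≤ 3 * Y := by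
    have h1 : σ₁ + σ₂ - 2 * q ^ 2 ≤ 3 * Y := by
      have : q ^ 2 * τ ^ 2 ≤ τ ^ 2 := by
        have : q ^ 2 ≤ 1 := by nlinarith
        exact mul_le_of_le_one_left (sq_nonneg τ) this
      linarith
    have : (1 - 3 / 2 * q) * (σ₁ + σ₂ - 2 * q ^ 2) ≤ (1 - 3 / 2 * q) * (3 * Y) :=
      mul_le_mul_of_nonneg_left h1 (by linarith)
    linarith [mul_nonneg hq.le hY0]
  rw [y1] at hg
  rw [y2]
  linarith

/-- Gain when the second pair of moves brings the two points together. -/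
lemma concaveGauge_toward_le {g p κ : ℝ} (hq : 0 < q) (hq1 : q ≤ 1 / 4096) (hτ : 0 ≤ τ)
    (hτq : 2 * τ ≤ q ^ 2) (hκ : |κ| ≤ τ) (hp : |p| ≤ 2 * τ) (hpg : p ≤ 2 * τ - g) :
    concaveGauge ((q ^ 2 + p) / (1 + κ)) + concaveGauge (q ^ 2 - 2 * τ)
      ≤ 2 * concaveGauge (q ^ 2) + (1 - 3 / 2 * q) * (4 * q ^ 2 * τ - g) - τ ^ 2 / q := by
  have hτ4 : τ ≤ 1 / 4 := by nlinarith
  obtain ⟨l1, r1⟩ := div_one_add_mem hτq hq1 hq hκ hp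
  have t1 := concaveGauge_le_tangent hq l1 r1
  have t2 := concaveGauge_le_tangent (τ := q ^ 2 - 2 * τ) hq (by linarith) (by nlinarith)
  have h1 : (q ^ 2 + p) / (1 + κ) - q ^ 2 ≤ 2 * τ - g + 4 * q ^ 2 * τ := by
    rw [abs_le] at *
    have k : 0 < 1 + κ := by linarith
    have : (q ^ 2 + p) / (1 + κ) ≤ (q ^ 2 + p) * (1 + 2 * τ) := by
      rw [div_le_iff₀ k, mul_assoc]
      refine le_mul_of_one_le_right (by linarith) ?_
      nlinarith
    nlinarith
  have e : (q ^ 2 - 2 * τ - q ^ 2) ^ 2 / (4 * q) = τ ^ 2 / q := by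
    field_simp
    ring
  have h2 := mul_le_mul_of_nonneg_left h1 (by linarith : 0 ≤ 1 - 3 / 2 * q)
  have g1 : 0 ≤ ((q ^ 2 + p) / (1 + κ) - q ^ 2) ^ 2 / (4 * q) := by positivity
  rw [e] at t2
  linarith

end GaugeEstimates

section Weight

variable {E : Type*} [NormedAddCommGroup E]

/-- A concave weight comparable to the distance of `m` to the sphere of radius `4 * r`. -/
noncomputable def ballWeight (r : ℝ) (z₀ m : E) : ℝ := ((4 * r) ^ 2 - ‖m - z₀‖ ^ 2) / (16 * r)

variable {r t : ℝ} {z₀ m c : E}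

lemma ballWeight_le (hr : 0 < r) : ballWeight r z₀ m ≤ r := by
  rw [ballWeight, div_le_iff₀ (by positivity)]
  nlinarith [sq_nonneg ‖m - z₀‖]

lemma norm_lt_of_ballWeight_pos (hr : 0 < r) (h : 0 < ballWeight r z₀ m) :
    ‖m - z₀‖ < 4 * r := by
  rw [ballWeight, div_pos_iff_of_pos_right (by positivity)] at h
  exact lt_of_pow_lt_pow_left₀ 2 (by positivity) (by linarith)

variable [InnerProductSpace ℝ E]

lemma ballWeight_add (r : ℝ) (z₀ m c : E) :
    ballWeight r z₀ (m + c)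
      = ballWeight r z₀ m - (2 * inner ℝ (m - z₀) c + ‖c‖ ^ 2) / (16 * r) := by
  rw [ballWeight, ballWeight, show m + c - z₀ = (m - z₀) + c by abel, norm_add_sq_real]
  ring

lemma abs_ballWeight_add_sub_le (hr : 0 < r) (h : 0 < ballWeight r z₀ m) (hc : ‖c‖ ≤ t)
    (htr : t ≤ r) : |ballWeight r z₀ (m + c) - ballWeight r z₀ m| ≤ t := by
  have hm := (norm_lt_of_ballWeight_pos hr h).le
  have hi : |inner ℝ (m - z₀) c| ≤ 4 * r * t := (abs_real_inner_le_norm _ _).trans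
    (mul_le_mul hm hc (norm_nonneg _) (by positivity))
  have hc2 : ‖c‖ ^ 2 ≤ r * t := by nlinarith [norm_nonneg c]
  rw [ballWeight_add, sub_sub_cancel_left, abs_neg, abs_div,
    abs_of_pos (by positivity : 0 < 16 * r), div_le_iff₀ (by positivity)]
  rw [abs_le] at hi ⊢
  have ht := (norm_nonneg c).trans hc
  constructor <;> nlinarith [sq_nonneg ‖c‖, mul_nonneg hr.le ht]

lemma abs_ballWeight_add_sub_ballWeight_sub_le (hr : 0 < r) (h : 0 < ballWeight r z₀ m)
    (hc : ‖c‖ ≤ t) : |ballWeight r z₀ (m + c) - ballWeight r z₀ (m - c)| ≤ t := by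
  have hm := (norm_lt_of_ballWeight_pos hr h).le
  have hi : |inner ℝ (m - z₀) c| ≤ 4 * r * t := (abs_real_inner_le_norm _ _).trans
    (mul_le_mul hm hc (norm_nonneg _) (by positivity))
  rw [sub_eq_add_neg m c, ballWeight_add, ballWeight_add, inner_neg_right, norm_neg]
  have e : ballWeight r z₀ m - (2 * inner ℝ (m - z₀) c + ‖c‖ ^ 2) / (16 * r)
      - (ballWeight r z₀ m - (2 * -inner ℝ (m - z₀) c + ‖c‖ ^ 2) / (16 * r))
      = -(inner ℝ (m - z₀) c / (4 * r)) := by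
    field_simp
    ring
  rw [e, abs_neg, abs_div, abs_of_pos (by positivity : 0 < 4 * r), div_le_iff₀ (by positivity)]
  linarith

lemma neg_sq_div_le_ballWeight_add (hr : 0 < r) (h : 0 < ballWeight r z₀ m) (hc : ‖c‖ ≤ t) :
    -(t ^ 2 / ballWeight r z₀ m)
      ≤ (ballWeight r z₀ (m + c) - ballWeight r z₀ m)
        + (ballWeight r z₀ (m - c) - ballWeight r z₀ m) := by
  rw [sub_eq_add_neg m c, ballWeight_add, ballWeight_add, inner_neg_right, norm_neg]
  have e : ballWeight r z₀ m - (2 * inner ℝ (m - z₀) c + ‖c‖ ^ 2) / (16 * r) - ballWeight r z₀ m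
      + (ballWeight r z₀ m - (2 * -inner ℝ (m - z₀) c + ‖c‖ ^ 2) / (16 * r) - ballWeight r z₀ m)
      = -(‖c‖ ^ 2 / (8 * r)) := by
    field_simp
    ring
  rw [e, neg_le_neg_iff]
  exact div_le_div₀ (sq_nonneg t) (pow_le_pow_left₀ (norm_nonneg c) hc 2) h
    (by linarith [ballWeight_le (z₀ := z₀) (m := m) hr])

end Weight

/-- Radial and angular control of two points of a parallelogram seen from its centre. -/
lemma parallelogram_bounds {s t ρ ρ' : ℝ} (ht : 0 < t) (hst : 4 * t ≤ s)
    (h : ρ ^ 2 + ρ' ^ 2 ≤ 2 * s ^ 2 + 8 * t ^ 2) (hD : |ρ - ρ'| ≤ 4 * t) :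
    ρ + ρ' ≤ 2 * s + (4 * t ^ 2 - ((ρ - ρ') / 2) ^ 2) / s ∧
      ρ ≤ s + 2 * t - (4 * t ^ 2 - ((ρ - ρ') / 2) ^ 2) / (8 * t) := by
  have hs : 0 < s := by linarith
  obtain ⟨D, hDdef⟩ : ∃ D, D = (ρ - ρ') / 2 := ⟨_, rfl⟩
  obtain ⟨S, hSdef⟩ : ∃ S, S = (ρ + ρ') / 2 := ⟨_, rfl⟩
  rw [← hDdef]
  have hρ : ρ = S + D := by rw [hDdef, hSdef]; ring
  have hρ' : ρ' = S - D := by rw [hDdef, hSdef]; ring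
  have hD' : |D| ≤ 2 * t := by
    rw [abs_le] at *
    constructor <;> linarith
  rw [hρ, hρ'] at h ⊢
  obtain ⟨e, he⟩ : ∃ e, e = 4 * t ^ 2 - D ^ 2 := ⟨_, rfl⟩
  rw [← he]
  have he0 : 0 ≤ e := by
    rw [abs_le] at hD'
    nlinarith
  clear hDdef hSdef hρ hρ'
  have hS2 : S ^ 2 ≤ s ^ 2 + e := by nlinarith
  have hS : S ≤ s + e / (2 * s) := by
    refine (le_abs_self S).trans (abs_le_of_sq_le_sq ?_ (by positivity))
    have : (s + e / (2 * s)) ^ 2 = s ^ 2 + e + (e / (2 * s)) ^ 2 := by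
      field_simp
      ring
    rw [this]
    linarith [sq_nonneg (e / (2 * s))]
  constructor
  · have : e / s = 2 * (e / (2 * s)) := by field_simp
    rw [this]
    linarith
  · have h1 : D ≤ 2 * t - e / (4 * t) := by
      have : 2 * t - e / (4 * t) - D = (2 * t - D) ^ 2 / (4 * t) := by
        rw [he]
        field_simp
        ring
      have h2 : 0 ≤ (2 * t - D) ^ 2 / (4 * t) := by positivity
      linarith
    have h2 : e / (2 * s) ≤ e / (8 * t) :=
      div_le_div_of_nonneg_left he0 (by positivity) (by linarith)
    have h3 : e / (4 * t) = 2 * (e / (8 * t)) := by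
      field_simp
      ring
    linarith

lemma abs_dist_sub_dist_le {E : Type*} [NormedAddCommGroup E] {x z a b : E} {t : ℝ}
    (ha : ‖a - x‖ ≤ t) (hb : ‖b - z‖ ≤ t) :
    |dist a b - dist x z| ≤ 2 * t := by
  rw [dist_eq_norm, dist_eq_norm]
  refine (abs_norm_sub_norm_le _ _).trans ?_
  rw [show a - b - (x - z) = (a - x) - (b - z) by abel]
  linarith [norm_sub_le (a - x) (b - z)]

section PairBound

variable {E : Type*} [NormedAddCommGroup E] [InnerProductSpace ℝ E]

/-- The bound `u a - u b ≤ K + A * ω(σ)` with `ω` the concave gauge and `σ` the distance of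
`a` and `b`, enlarged by `2 * ε`, relative to the weight of their midpoint, for all pairs with
`σ ≤ 4 * q₀ ^ 2`. -/
def PairBound (u : E → ℝ) (A ε r q₀ : ℝ) (z₀ : E) (K : ℝ) : Prop :=
  ∀ a ∈ ball z₀ (6 * r), ∀ b ∈ ball z₀ (6 * r), 0 < ballWeight r z₀ ((1 / 2 : ℝ) • (a + b)) →
    (dist a b + 2 * ε) / ballWeight r z₀ ((1 / 2 : ℝ) • (a + b)) ≤ 4 * q₀ ^ 2 →
    u a - u b ≤ K + A * concaveGauge ((dist a b + 2 * ε) / ballWeight r z₀ ((1 / 2 : ℝ) • (a + b)))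

/-- A pair of points whose enlarged distance relative to the weight `d` of their midpoint is the
square of the small number `q`. -/
structure IsSmallPair (r ε q d : ℝ) (z₀ x z : E) : Prop where
  eps_pos : 0 < ε
  eps_lt : ε < r
  q_pos : 0 < q
  q_le : q ≤ 1 / 4096
  weight_pos : 0 < d
  weight_eq : ballWeight r z₀ ((1 / 2 : ℝ) • (x + z)) = d
  dist_eq : q ^ 2 * d = dist x z + 2 * ε

variable {u : E → ℝ} {A ε r q q₀ K d t I M : ℝ} {z₀ x z a b : E}

lemma exists_midpoint_eq_add (ha : ‖a - x‖ ≤ t) (hb : ‖b - z‖ ≤ t) :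
    ∃ c : E, ‖c‖ ≤ t ∧ (1 / 2 : ℝ) • (a + b) = (1 / 2 : ℝ) • (x + z) + c ∧
      (1 / 2 : ℝ) • ((2 : ℝ) • x - a + ((2 : ℝ) • z - b)) = (1 / 2 : ℝ) • (x + z) - c := by
  refine ⟨(1 / 2 : ℝ) • ((a - x) + (b - z)), ?_, by module, by module⟩
  rw [norm_smul, Real.norm_of_nonneg (by norm_num)]
  linarith [norm_add_le (a - x) (b - z)]

namespace IsSmallPair

lemma r_pos (h : IsSmallPair r ε q d z₀ x z) : 0 < r := h.eps_pos.trans h.eps_lt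

lemma two_mul_div_le (h : IsSmallPair r ε q d z₀ x z) (ht : t ≤ ε) : 2 * (t / d) ≤ q ^ 2 := by
  rw [← mul_div_assoc, div_le_iff₀ h.weight_pos, h.dist_eq]
  linarith [dist_nonneg (x := x) (y := z)]

lemma abs_dist_sub_div_le (h : IsSmallPair r ε q d z₀ x z) (ha : ‖a - x‖ ≤ t)
    (hb : ‖b - z‖ ≤ t) : |(dist a b - dist x z) / d| ≤ 2 * (t / d) := by
  rw [abs_div, abs_of_pos h.weight_pos, ← mul_div_assoc]
  exact div_le_div_of_nonneg_right (abs_dist_sub_dist_le ha hb) h.weight_pos.le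

lemma abs_weight_sub_div_le (h : IsSmallPair r ε q d z₀ x z) (ht : t ≤ ε) (ha : ‖a - x‖ ≤ t)
    (hb : ‖b - z‖ ≤ t) : |(ballWeight r z₀ ((1 / 2 : ℝ) • (a + b)) - d) / d| ≤ t / d := by
  obtain ⟨c, hc, hab, -⟩ := exists_midpoint_eq_add ha hb
  rw [abs_div, abs_of_pos h.weight_pos, hab]
  refine div_le_div_of_nonneg_right ?_ h.weight_pos.le
  have := abs_ballWeight_add_sub_le h.r_pos (by rw [h.weight_eq]; exact h.weight_pos) hc
    (ht.trans h.eps_lt.le)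
  rwa [h.weight_eq] at this

lemma dist_le (h : IsSmallPair r ε q d z₀ x z) : dist x z ≤ r := by
  have h1 : d ≤ r := h.weight_eq ▸ ballWeight_le h.r_pos
  have h2 : q ^ 2 ≤ 1 := pow_le_one₀ h.q_pos.le (by linarith [h.q_le])
  nlinarith [h.dist_eq, h.eps_pos, h.weight_pos]

lemma symm (h : IsSmallPair r ε q d z₀ x z) : IsSmallPair r ε q d z₀ z x where
  __ := h
  weight_eq := by rw [add_comm, h.weight_eq]
  dist_eq := by rw [dist_comm, h.dist_eq]

lemma mem_ball_of_norm_sub_le (h : IsSmallPair r ε q d z₀ x z) (ha : ‖a - x‖ ≤ ε) :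
    a ∈ ball z₀ (6 * r) := by
  have h1 : ‖(1 / 2 : ℝ) • (x + z) - z₀‖ < 4 * r :=
    norm_lt_of_ballWeight_pos h.r_pos (by rw [h.weight_eq]; exact h.weight_pos)
  have h2 : ‖(1 / 2 : ℝ) • (x - z)‖ = 1 / 2 * dist x z := by
    rw [norm_smul, Real.norm_of_nonneg (by norm_num), dist_eq_norm]
  rw [Metric.mem_ball, dist_eq_norm, show a - z₀
    = (a - x) + (1 / 2 : ℝ) • (x - z) + ((1 / 2 : ℝ) • (x + z) - z₀) by module]
  have h3 := norm_add₃_le (a := a - x) (b := (1 / 2 : ℝ) • (x - z))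
    (c := (1 / 2 : ℝ) • (x + z) - z₀)
  linarith [h.dist_le, h.eps_lt, h.r_pos]

/-- The bound of a pair near a small pair, in terms of relative displacements. -/
lemma sub_le (h : IsSmallPair r ε q d z₀ x z) (hP : PairBound u A ε r q₀ z₀ K) (hq₀ : q ≤ q₀)
    (ha : ‖a - x‖ ≤ ε) (hb : ‖b - z‖ ≤ ε) :
    u a - u b ≤ K + A * concaveGauge ((q ^ 2 + (dist a b - dist x z) / d)
      / (1 + (ballWeight r z₀ ((1 / 2 : ℝ) • (a + b)) - d) / d)) := by
  have hκ := h.abs_weight_sub_div_le le_rfl ha hb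
  have hτ := h.two_mul_div_le le_rfl
  have hm := div_one_add_mem hτ h.q_le h.q_pos hκ (h.abs_dist_sub_div_le ha hb)
  have hd := h.weight_pos
  have hpos : 0 < ballWeight r z₀ ((1 / 2 : ℝ) • (a + b)) / d := by
    have : ε / d < 1 := by nlinarith [h.q_pos, h.q_le]
    have h1 := (abs_le.1 hκ).1
    rw [sub_div, div_self hd.ne'] at h1
    linarith
  have hpos' : 0 < ballWeight r z₀ ((1 / 2 : ℝ) • (a + b)) := by
    rwa [div_pos_iff_of_pos_right hd] at hpos
  have e : (q ^ 2 + (dist a b - dist x z) / d)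
      / (1 + (ballWeight r z₀ ((1 / 2 : ℝ) • (a + b)) - d) / d)
      = (dist a b + 2 * ε) / ballWeight r z₀ ((1 / 2 : ℝ) • (a + b)) := by
    rw [sub_div _ d d, div_self hd.ne', add_sub_cancel,
      show q ^ 2 = (dist x z + 2 * ε) / d by rw [eq_div_iff hd.ne', h.dist_eq], ← add_div,
      div_div_div_cancel_right₀ hd.ne']
    ring_nf
  rw [e] at hm ⊢
  refine hP a (h.mem_ball_of_norm_sub_le ha) b (h.symm.mem_ball_of_norm_sub_le hb) hpos'
    (hm.2.trans ?_)
  have := pow_le_pow_left₀ h.q_pos.le hq₀ 2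
  linarith

/-- Moving both points towards each other. -/
lemma le_of_forall_le (h : IsSmallPair r ε q d z₀ x z) (hP : PairBound u A ε r q₀ z₀ K)
    (hq₀ : q ≤ q₀) (hK : 0 ≤ K) (hA : 0 ≤ A) (ht : 0 < t) (htε : t ≤ ε)
    (hI : ∀ a' ∈ ball x t, ∀ b' ∈ ball z t, I ≤ u a' - u b') :
    I ≤ K + A * concaveGauge (q ^ 2 - 2 * (t / d)) := by
  have hlim : Filter.Tendsto (fun t' : ℝ ↦ K + A * concaveGauge (q ^ 2 - 2 * (t' / d)))
      (nhdsWithin t (Iio t)) (nhds (K + A * concaveGauge (q ^ 2 - 2 * (t / d)))) := by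
    refine Filter.Tendsto.mono_left (Continuous.tendsto ?_ t) nhdsWithin_le_nhds
    have := continuous_concaveGauge
    fun_prop
  refine ge_of_tendsto hlim ?_
  filter_upwards [Ioo_mem_nhdsLT ht] with t' ht'
  have hs2 : ‖(1 / 2 : ℝ) • (x - z)‖ = 1 / 2 * dist x z := by
    rw [norm_smul, Real.norm_of_nonneg (by norm_num), dist_eq_norm]
  rcases le_or_gt (dist x z) (2 * t') with hs | hs
  · have hx : (1 / 2 : ℝ) • (x + z) ∈ ball x t := by
      rw [Metric.mem_ball, dist_eq_norm,
        show (1 / 2 : ℝ) • (x + z) - x = -((1 / 2 : ℝ) • (x - z)) by module, norm_neg, hs2]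
      linarith [ht'.2]
    have hz : (1 / 2 : ℝ) • (x + z) ∈ ball z t := by
      rw [Metric.mem_ball, dist_eq_norm,
        show (1 / 2 : ℝ) • (x + z) - z = (1 / 2 : ℝ) • (x - z) by module, hs2]
      linarith [ht'.2]
    have h1 := hI _ hx _ hz
    have h2 := h.two_mul_div_le (ht'.2.le.trans htε)
    have h3 : 0 ≤ t' / d := div_nonneg ht'.1.le h.weight_pos.le
    have h4 := concaveGauge_nonneg (σ := q ^ 2 - 2 * (t' / d)) (by linarith)
      (by nlinarith [h.q_pos, h.q_le])
    nlinarith [mul_nonneg hA h4]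
  · have hs0 : 0 < dist x z := by linarith [ht'.1]
    have hn : ‖(t' / dist x z) • (x - z)‖ = t' := by
      rw [norm_smul, Real.norm_of_nonneg (div_nonneg ht'.1.le hs0.le), ← dist_eq_norm,
        div_mul_cancel₀ _ hs0.ne']
    have hx : ‖x - (t' / dist x z) • (x - z) - x‖ = t' := by
      rw [sub_sub_cancel_left, norm_neg, hn]
    have hz : ‖z + (t' / dist x z) • (x - z) - z‖ = t' := by
      rw [add_sub_cancel_left, hn]
    have h1 := hI (x - (t' / dist x z) • (x - z))
      (by rw [Metric.mem_ball, dist_eq_norm, hx]; exact ht'.2) (z + (t' / dist x z) • (x - z))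
      (by rw [Metric.mem_ball, dist_eq_norm, hz]; exact ht'.2)
    have h2 := h.sub_le hP hq₀ (hx.le.trans (ht'.2.le.trans htε))
      (hz.le.trans (ht'.2.le.trans htε))
    have hmid : (1 / 2 : ℝ) • (x - (t' / dist x z) • (x - z) + (z + (t' / dist x z) • (x - z)))
        = (1 / 2 : ℝ) • (x + z) := by module
    have hdist : dist (x - (t' / dist x z) • (x - z)) (z + (t' / dist x z) • (x - z))
        = dist x z - 2 * t' := by
      rw [dist_eq_norm, show x - (t' / dist x z) • (x - z) - (z + (t' / dist x z) • (x - z))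
        = (1 - 2 * (t' / dist x z)) • (x - z) by module, norm_smul,
        ← dist_eq_norm x z, Real.norm_of_nonneg]
      · field_simp
      · rw [sub_nonneg, ← mul_div_assoc, div_le_one hs0]
        exact hs.le
    rw [hmid, h.weight_eq, hdist] at h2
    refine h1.trans (h2.trans_eq ?_)
    congr 3
    field_simp
    ring

lemma add_le_of_dist_le (h : IsSmallPair r ε q d z₀ x z) (hP : PairBound u A ε r q₀ z₀ K)
    (hq₀ : q ≤ q₀) (hK : 0 ≤ K) (hA : 0 ≤ A) (ht : 0 < t) (htε : t ≤ ε) {g : ℝ}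
    (ha : ‖a - x‖ ≤ t) (hb : ‖b - z‖ ≤ t) (hg : dist a b ≤ dist x z + 2 * t - g)
    (hI : ∀ a' ∈ ball x t, ∀ b' ∈ ball z t, I ≤ u a' - u b') :
    u a - u b + I ≤ 2 * (K + A * concaveGauge (q ^ 2))
      + A * ((1 - 3 / 2 * q) * (4 * q ^ 2 * (t / d) - g / d) - (t / d) ^ 2 / q) := by
  have h1 := h.le_of_forall_le hP hq₀ hK hA ht htε hI
  have h2 := h.sub_le hP hq₀ (ha.trans htε) (hb.trans htε)
  have h3 := concaveGauge_toward_le (g := g / d) h.q_pos h.q_le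
    (div_nonneg ht.le h.weight_pos.le) (h.two_mul_div_le htε) (h.abs_weight_sub_div_le htε ha hb)
    (h.abs_dist_sub_div_le ha hb) (by
      rw [← mul_div_assoc, ← sub_div]
      exact div_le_div_of_nonneg_right (by linarith) h.weight_pos.le)
  have h4 := mul_le_mul_of_nonneg_left h3 hA
  linarith

lemma add_le (h : IsSmallPair r ε q d z₀ x z) (hP : PairBound u A ε r q₀ z₀ K)
    (hq₀ : q ≤ q₀) (hK : 0 ≤ K) (hA : 0 ≤ A) (ht : 0 < t) (htε : t ≤ ε)
    (ha : ‖a - x‖ ≤ t) (hb : ‖b - z‖ ≤ t)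
    (hI : ∀ a' ∈ ball x t, ∀ b' ∈ ball z t, I ≤ u a' - u b') :
    u a - u b + I ≤ 2 * (K + A * concaveGauge (q ^ 2))
      + A * (4 * q ^ 2 * (t / d) - (t / d) ^ 2 / (16 * q)) := by
  have h1 := h.add_le_of_dist_le hP hq₀ hK hA ht htε (g := 0) ha hb
    (by linarith [(abs_le.1 (abs_dist_sub_dist_le ha hb)).2]) hI
  refine h1.trans (add_le_add le_rfl (mul_le_mul_of_nonneg_left ?_ hA))
  have hq := h.q_pos
  have hd := h.weight_pos
  have h2 : (t / d) ^ 2 / (16 * q) ≤ (t / d) ^ 2 / q :=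
    div_le_div_of_nonneg_left (sq_nonneg _) hq (by linarith)
  have h3 : 0 ≤ q * (4 * q ^ 2 * (t / d)) := by positivity
  rw [zero_div, sub_zero]
  linarith

lemma add_le_of_four_mul_le (h : IsSmallPair r ε q d z₀ x z) (hP : PairBound u A ε r q₀ z₀ K)
    (hq₀ : q ≤ q₀) (hK : 0 ≤ K) (hA : 0 ≤ A) (ht : 0 < t) (htε : t ≤ ε)
    (hs : 4 * ε ≤ dist x z) (ha : a ∈ ball x t) (hb : b ∈ ball z t)
    (hI : ∀ a' ∈ ball x t, ∀ b' ∈ ball z t, I ≤ u a' - u b') :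
    u a - u b + I ≤ 2 * (K + A * concaveGauge (q ^ 2)) + A * -((t / d) ^ 2 / (16 * q)) := by
  have hq := h.q_pos
  have hq1 := h.q_le
  have hd := h.weight_pos
  have hε := h.eps_pos
  have hs0 : 0 < dist x z := by linarith
  rw [Metric.mem_ball, dist_eq_norm] at ha hb
  have hxa : (2 : ℝ) • x - a - x = -(a - x) := by module
  have hzb : (2 : ℝ) • z - b - z = -(b - z) := by module
  have ha' : ‖(2 : ℝ) • x - a - x‖ < t := by rwa [hxa, norm_neg]
  have hb' : ‖(2 : ℝ) • z - b - z‖ < t := by rwa [hzb, norm_neg]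
  have hw : ‖(a - x) - (b - z)‖ ≤ 2 * t := by linarith [norm_sub_le (a - x) (b - z)]
  have e1 : a - b = (x - z) + ((a - x) - (b - z)) := by abel
  have e2 : (2 : ℝ) • x - a - ((2 : ℝ) • z - b) = (x - z) - ((a - x) - (b - z)) := by module
  have hpar : dist a b ^ 2 + dist ((2 : ℝ) • x - a) ((2 : ℝ) • z - b) ^ 2
      ≤ 2 * dist x z ^ 2 + 8 * t ^ 2 := by
    rw [dist_eq_norm a, dist_eq_norm x, dist_eq_norm ((2 : ℝ) • x - a), e1, e2]
    have := parallelogram_law_with_norm ℝ (x - z) ((a - x) - (b - z))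
    nlinarith [pow_le_pow_left₀ (norm_nonneg _) hw 2]
  have hdiff : |dist a b - dist ((2 : ℝ) • x - a) ((2 : ℝ) • z - b)| ≤ 4 * t := by
    rw [dist_eq_norm a, dist_eq_norm ((2 : ℝ) • x - a)]
    refine (abs_norm_sub_norm_le _ _).trans ?_
    rw [e1, e2, add_sub_sub_cancel, ← two_smul ℝ ((a - x) - (b - z)), norm_smul,
      Real.norm_of_nonneg (by norm_num)]
    linarith
  obtain ⟨hsum, hone⟩ := parallelogram_bounds ht (by linarith) hpar hdiff
  have hp₁ := h.abs_dist_sub_div_le ha.le hb.le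
  have hp₂ := h.abs_dist_sub_div_le ha'.le hb'.le
  have hsub := h.sub_le hP hq₀ (ha.le.trans htε) (hb.le.trans htε)
  have hsub' := h.sub_le hP hq₀ (ha'.le.trans htε) (hb'.le.trans htε)
  have hκ₁ := h.abs_weight_sub_div_le htε ha.le hb.le
  have hκ₂ := h.abs_weight_sub_div_le htε ha'.le hb'.le
  have hII := hI _ (by rwa [Metric.mem_ball, dist_eq_norm]) _
    (by rwa [Metric.mem_ball, dist_eq_norm] : (2 : ℝ) • z - b ∈ ball z t)
  have hwpos : 0 < ballWeight r z₀ ((1 / 2 : ℝ) • (x + z)) := by rwa [h.weight_eq]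
  obtain ⟨c, hc, hm, hm'⟩ := exists_midpoint_eq_add ha.le hb.le
  have hκ := abs_ballWeight_add_sub_ballWeight_sub_le h.r_pos hwpos hc
  have hκlo := neg_sq_div_le_ballWeight_add h.r_pos hwpos hc
  rw [← hm, ← hm'] at hκ hκlo
  rw [h.weight_eq] at hκlo
  generalize ballWeight r z₀ ((1 / 2 : ℝ) • (a + b)) = w at *
  generalize ballWeight r z₀ ((1 / 2 : ℝ) • ((2 : ℝ) • x - a + ((2 : ℝ) • z - b))) = w' at *
  generalize hρ' : dist ((2 : ℝ) • x - a) ((2 : ℝ) • z - b) = ρ' at *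
  obtain ⟨e, he⟩ : ∃ e, e = 4 * t ^ 2 - ((dist a b - ρ') / 2) ^ 2 := ⟨_, rfl⟩
  rw [← he] at hsum hone
  rcases le_or_gt e (t ^ 2 * q / 128) with hle | hgt
  · have h1 := concaveGauge_opposite_le hq hq1 (div_nonneg ht.le hd.le) (h.two_mul_div_le htε)
      hκ₁ hκ₂ (by
        rw [← sub_div, sub_sub_sub_cancel_right, abs_div, abs_of_pos hd]
        exact div_le_div_of_nonneg_right hκ hd.le) (by
        rw [← add_div, le_div_iff₀ hd]
        refine le_trans (le_of_eq ?_) hκlo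
        field_simp) hp₁ hp₂ (by
        have h1 : (dist a b - dist x z) / d + (ρ' - dist x z) / d ≤ e / dist x z / d := by
          rw [← add_div]
          exact div_le_div_of_nonneg_right (by linarith) hd.le
        refine h1.trans ?_
        rw [div_div, div_pow, div_div, div_le_div_iff₀ (by positivity) (by positivity)]
        have h2 : q ^ 2 * d ≤ 2 * dist x z := by linarith [h.dist_eq]
        calc e * (d ^ 2 * (64 * q)) ≤ t ^ 2 * q / 128 * (d ^ 2 * (64 * q)) :=
              mul_le_mul_of_nonneg_right hle (by positivity)
          _ = t ^ 2 * d / 2 * (q ^ 2 * d) := by ring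
          _ ≤ t ^ 2 * d / 2 * (2 * dist x z) := mul_le_mul_of_nonneg_left h2 (by positivity)
          _ = t ^ 2 * (dist x z * d) := by ring) (by
        rw [← sub_div, div_pow, div_pow, ← mul_div_assoc]
        refine div_le_div_of_nonneg_right ?_ (sq_nonneg d)
        have : t ^ 2 * q / 128 ≤ t ^ 2 := by nlinarith [sq_nonneg t]
        linarith)
    have h2 := mul_le_mul_of_nonneg_left h1 hA
    linarith
  · have h1 := h.add_le_of_dist_le hP hq₀ hK hA ht htε ha.le hb.le hone hI
    refine h1.trans (add_le_add le_rfl (mul_le_mul_of_nonneg_left ?_ hA))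
    have h2 : 4 * q ^ 2 * (t / d) ≤ e / (8 * t) / d := by
      rw [← mul_div_assoc]
      refine div_le_div_of_nonneg_right ?_ hd.le
      rw [le_div_iff₀ (by positivity)]
      have : t ^ 2 * q * (32 * q) ≤ t ^ 2 * q * (1 / 128) :=
        mul_le_mul_of_nonneg_left (by linarith) (by positivity)
      linarith
    have h3 : (t / d) ^ 2 / (16 * q) ≤ (t / d) ^ 2 / q :=
      div_le_div_of_nonneg_left (sq_nonneg _) hq (by linarith)
    have h4 : (1 - 3 / 2 * q) * (4 * q ^ 2 * (t / d) - e / (8 * t) / d) ≤ 0 :=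
      mul_nonpos_of_nonneg_of_nonpos (by linarith) (by linarith)
    linarith

lemma tugIntegral_sub_le (h : IsSmallPair r ε q d z₀ x z) (hP : PairBound u A ε r q₀ z₀ K)
    (hq₀ : q ≤ q₀) (hK : 0 ≤ K) (hA : 0 ≤ A) (hux : ∀ y ∈ ball x ε, |u y| ≤ M)
    (huz : ∀ y ∈ ball z ε, |u y| ≤ M) :
    tugIntegral ε u x - tugIntegral ε u z
      ≤ 2 * ε * (K + A * concaveGauge (q ^ 2) - A * (ε / d) ^ 2 / (192 * q)) := by
  have hq := h.q_pos
  have hd := h.weight_pos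
  have hε := h.eps_pos
  have hY : 0 ≤ A * (ε / d) ^ 2 / (192 * q) := by positivity
  have e : A / (16 * q * d ^ 2) * ε ^ 3 / 3 = 4 * ε * (A * (ε / d) ^ 2 / (192 * q)) := by
    field_simp
    ring
  rcases le_or_gt (4 * ε) (dist x z) with hs | hs
  · have h1 := _root_.tugIntegral_sub_le hε hux huz
      (G := fun t ↦ 2 * (K + A * concaveGauge (q ^ 2)) + 0 * t - A / (16 * q * d ^ 2) * t ^ 2)
      (by fun_prop) (by
        intro t ht a ha b hb I hI
        refine (h.add_le_of_four_mul_le hP hq₀ hK hA ht.1 ht.2.le hs ha hb hI).trans_eq ?_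
        field_simp
        ring)
    rw [integral_quadratic, e] at h1
    nlinarith [mul_nonneg hε.le hY]
  · have h1 := _root_.tugIntegral_sub_le hε hux huz
      (G := fun t ↦ 2 * (K + A * concaveGauge (q ^ 2)) + A * (4 * q ^ 2 / d) * t
        - A / (16 * q * d ^ 2) * t ^ 2)
      (by fun_prop) (by
        intro t ht a ha b hb I hI
        rw [Metric.mem_ball, dist_eq_norm] at ha hb
        refine (h.add_le hP hq₀ hK hA ht.1 ht.2.le ha.le hb.le hI).trans_eq ?_
        field_simp
        ring)
    rw [integral_quadratic, e] at h1
    have e' : A * (4 * q ^ 2 / d) * ε ^ 2 / 2 ≤ 2 * ε * (A * (ε / d) ^ 2 / (192 * q)) := by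
      have h2 : q ^ 2 ≤ 6 * (ε / d) := by
        rw [← mul_div_assoc, le_div_iff₀ hd]
        linarith [h.dist_eq]
      have h3 : 6 * (ε / d) ^ 2 ≤ (ε / d) ^ 2 / (192 * q) := by
        rw [le_div_iff₀ (by positivity)]
        nlinarith [h.q_le, sq_nonneg (ε / d)]
      have h4 : q ^ 2 * (ε / d) ≤ (ε / d) ^ 2 / (192 * q) := by
        nlinarith [div_pos hε hd]
      have h5 := mul_le_mul_of_nonneg_left h4 (by positivity : 0 ≤ 2 * ε * A)
      calc A * (4 * q ^ 2 / d) * ε ^ 2 / 2 = 2 * ε * A * (q ^ 2 * (ε / d)) := by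
            field_simp
            norm_num
        _ ≤ _ := h5
        _ = _ := by ring
    linarith

variable [FiniteDimensional ℝ E] [MeasurableSpace E] [BorelSpace E] {μ : Measure E}
  [μ.IsAddHaarMeasure]

lemma setAverage_sub_le (h : IsSmallPair r ε q d z₀ x z) (hP : PairBound u A ε r q₀ z₀ K)
    (hq₀ : q ≤ q₀) (hA : 0 ≤ A) (hu : Measurable u) (hux : ∀ y ∈ ball x ε, |u y| ≤ M)
    (huz : ∀ y ∈ ball z ε, |u y| ≤ M) :
    (⨍ y in ball x ε, u y ∂μ) - ⨍ y in ball z ε, u y ∂μ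
      ≤ K + A * concaveGauge (q ^ 2) + 3 * A * q ^ 2 * (ε / d) ^ 2 := by
  refine setAverage_ball_sub_le μ h.eps_pos hu hu hux huz fun k hk ↦ ?_
  have hd := h.weight_pos
  have hwpos : 0 < ballWeight r z₀ ((1 / 2 : ℝ) • (x + z)) := by rwa [h.weight_eq]
  have hk' : ‖k‖ ≤ ε := (mem_ball_zero_iff.1 hk).le
  have hx : ‖x + k - x‖ ≤ ε := by simpa using hk'
  have hz : ‖z + k - z‖ ≤ ε := by simpa using hk'
  have hx' : ‖x - k - x‖ ≤ ε := by simpa using hk'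
  have hz' : ‖z - k - z‖ ≤ ε := by simpa using hk'
  have h1 := h.sub_le hP hq₀ hx hz
  have h2 := h.sub_le hP hq₀ hx' hz'
  have hκ₁ := h.abs_weight_sub_div_le le_rfl hx hz
  have hκ₂ := h.abs_weight_sub_div_le le_rfl hx' hz'
  have hlo := neg_sq_div_le_ballWeight_add h.r_pos hwpos hk'
  rw [show (1 / 2 : ℝ) • (x + k + (z + k)) = (1 / 2 : ℝ) • (x + z) + k by module] at h1 hκ₁
  rw [show (1 / 2 : ℝ) • (x - k + (z - k)) = (1 / 2 : ℝ) • (x + z) - k by module] at h2 hκ₂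
  rw [dist_add_right, sub_self, zero_div, add_zero] at h1
  rw [dist_sub_right, sub_self, zero_div, add_zero] at h2
  rw [h.weight_eq] at hlo
  have h3 := concaveGauge_parallel_le h.q_pos h.q_le (div_nonneg h.eps_pos.le hd.le)
    (h.two_mul_div_le le_rfl) hκ₁ hκ₂ (by
      rw [← add_div, le_div_iff₀ hd]
      refine le_trans (le_of_eq ?_) hlo
      field_simp)
  have h4 := mul_le_mul_of_nonneg_left h3 hA
  linarith

lemma sub_le_of_satisfiesDPP (h : IsSmallPair r ε q d z₀ x z)
    (hP : PairBound u A ε r q₀ z₀ K) (hq₀ : q ≤ q₀) (hK : 0 ≤ K) (hA : 0 ≤ A)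
    (hu : Measurable u) (hux : ∀ y ∈ ball x ε, |u y| ≤ M) (huz : ∀ y ∈ ball z ε, |u y| ≤ M)
    {α β : ℝ} (hβ : 0 ≤ β) (hαβ : α + β = 1) (hqα : q ≤ α / 4096)
    (hx : SatisfiesDPP μ α β ε u x) (hz : SatisfiesDPP μ α β ε u z) :
    u x - u z ≤ K + A * concaveGauge (q ^ 2) - A * (ε / r) ^ 2 := by
  have hq := h.q_pos
  have hd := h.weight_pos
  have hε := h.eps_pos
  have hα : 0 < α := by linarith
  have h1 := mul_le_mul_of_nonneg_left (h.tugIntegral_sub_le hP hq₀ hK hA hux huz)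
    (by positivity : 0 ≤ α / (2 * ε))
  have h2 := mul_le_mul_of_nonneg_left (h.setAverage_sub_le (μ := μ) hP hq₀ hA hu hux huz) hβ
  have hdr : d ≤ r := h.weight_eq ▸ ballWeight_le h.r_pos
  have h3 : (ε / r) ^ 2 ≤ (ε / d) ^ 2 :=
    pow_le_pow_left₀ (div_nonneg hε.le h.r_pos.le) (div_le_div_of_nonneg_left hε.le hd hdr) 2
  have h4 : 2 * (ε / d) ^ 2 ≤ α * ((ε / d) ^ 2 / (192 * q)) := by
    rw [← mul_div_assoc, le_div_iff₀ (by positivity)]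
    nlinarith [sq_nonneg (ε / d)]
  have h5 : β * (3 * q ^ 2 * (ε / d) ^ 2) ≤ (ε / d) ^ 2 := by
    rw [← mul_assoc]
    refine mul_le_of_le_one_left (sq_nonneg _) ?_
    have : q ^ 2 ≤ 1 / 3 := by nlinarith [h.q_le]
    nlinarith
  have h6 : A * (ε / r) ^ 2 + A * (β * (3 * q ^ 2 * (ε / d) ^ 2))
      ≤ A * (α * ((ε / d) ^ 2 / (192 * q))) := by
    rw [← mul_add]
    exact mul_le_mul_of_nonneg_left (by linarith) hA
  unfold SatisfiesDPP at hx hz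
  have e1 : α / (2 * ε) * (2 * ε * (K + A * concaveGauge (q ^ 2) - A * (ε / d) ^ 2 / (192 * q)))
      = α * (K + A * concaveGauge (q ^ 2)) - A * (α * ((ε / d) ^ 2 / (192 * q))) := by
    field_simp
  have e2 : (α + β) * (K + A * concaveGauge (q ^ 2)) = K + A * concaveGauge (q ^ 2) := by
    rw [hαβ, one_mul]
  linarith

end IsSmallPair

variable [FiniteDimensional ℝ E] [MeasurableSpace E] [BorelSpace E] {μ : Measure E}
  [μ.IsAddHaarMeasure]

/-- The error `K` in the pair bound of a solution improves by a fixed amount. -/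
lemma PairBound.max_sub {α β : ℝ} (hε : 0 < ε) (hεr : ε < r) (hα : 0 < α) (hβ : 0 ≤ β)
    (hαβ : α + β = 1) (hA : 0 ≤ A) (hAM : 2 * M ≤ A * concaveGauge ((α / 4096) ^ 2))
    (hu : Measurable u) (huM : ∀ x ∈ ball z₀ (6 * r), ∀ y ∈ ball x ε, |u y| ≤ M)
    (hdpp : ∀ x ∈ ball z₀ (6 * r), SatisfiesDPP μ α β ε u x) (hK : 0 ≤ K)
    (hP : PairBound u A ε r (α / 4096) z₀ K) :
    PairBound u A ε r (α / 4096) z₀ (max (K - A * (ε / r) ^ 2) 0) := by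
  intro x hx z hz hd hσ
  have hα1 : α / 4096 ≤ 1 / 4096 := by linarith
  rcases le_or_gt ((dist x z + 2 * ε) / ballWeight r z₀ ((1 / 2 : ℝ) • (x + z)))
    ((α / 4096) ^ 2) with hle | hgt
  · have hs := dist_nonneg (x := x) (y := z)
    have hσ0 : 0 < (dist x z + 2 * ε) / ballWeight r z₀ ((1 / 2 : ℝ) • (x + z)) := by positivity
    have hq := Real.sqrt_le_sqrt hle
    rw [Real.sqrt_sq (by positivity)] at hq
    have hsq := Real.sq_sqrt hσ0.le
    have h : IsSmallPair r ε (√((dist x z + 2 * ε) / ballWeight r z₀ ((1 / 2 : ℝ) • (x + z))))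
        (ballWeight r z₀ ((1 / 2 : ℝ) • (x + z))) z₀ x z :=
      { eps_pos := hε
        eps_lt := hεr
        q_pos := Real.sqrt_pos.2 hσ0
        q_le := hq.trans hα1
        weight_pos := hd
        weight_eq := rfl
        dist_eq := by rw [hsq, div_mul_cancel₀ _ hd.ne'] }
    have h1 := h.sub_le_of_satisfiesDPP hP hq hK hA hu (huM x hx) (huM z hz) hβ hαβ hq
      (hdpp x hx) (hdpp z hz)
    rw [hsq] at h1
    linarith [le_max_left (K - A * (ε / r) ^ 2) 0]
  · have h1 := abs_le.1 (huM x hx x (mem_ball_self hε))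
    have h2 := abs_le.1 (huM z hz z (mem_ball_self hε))
    have h3 := mul_le_mul_of_nonneg_left (concaveGauge_mono (sq_nonneg _) hgt.le
      (hσ.trans (by nlinarith))) hA
    linarith [le_max_right (K - A * (ε / r) ^ 2) 0]

/-- Solutions bounded by `M` satisfy the pair bound without error. -/
lemma pairBound_zero {α β : ℝ} (hε : 0 < ε) (hεr : ε < r) (hα : 0 < α) (hβ : 0 ≤ β)
    (hαβ : α + β = 1) (hA : 0 < A) (hAM : 2 * M ≤ A * concaveGauge ((α / 4096) ^ 2))
    (hu : Measurable u) (huM : ∀ x ∈ ball z₀ (6 * r), ∀ y ∈ ball x ε, |u y| ≤ M)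
    (hdpp : ∀ x ∈ ball z₀ (6 * r), SatisfiesDPP μ α β ε u x) :
    PairBound u A ε r (α / 4096) z₀ 0 := by
  have hr : 0 < r := hε.trans hεr
  refine of_forall_max_sub (K := 2 * M) (δ := A * (ε / r) ^ 2) (by positivity) ?_
    fun K hK hP ↦ hP.max_sub hε hεr hα hβ hαβ hA.le hAM hu huM hdpp hK
  intro x hx z hz hd hσ
  have h1 := abs_le.1 (huM x hx x (mem_ball_self hε))
  have h2 := abs_le.1 (huM z hz z (mem_ball_self hε))
  have h3 := mul_nonneg hA.le (concaveGauge_nonneg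
    (div_nonneg (by linarith [dist_nonneg (x := x) (y := z)]) hd.le) (hσ.trans (by nlinarith)))
  linarith [le_max_left (2 * M) 0]

/-- The one-sided Lipschitz estimate up to scale `ε`. -/
lemma sub_le_of_forall_satisfiesDPP {α β : ℝ} (hε : 0 < ε) (hεr : ε < r) (hα : 0 < α)
    (hβ : 0 ≤ β) (hαβ : α + β = 1) (hA : 0 < A)
    (hAM : 2 * M ≤ A * concaveGauge ((α / 4096) ^ 2))
    (hu : Measurable u) (huM : ∀ x ∈ ball z₀ (6 * r), ∀ y ∈ ball x ε, |u y| ≤ M)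
    (hdpp : ∀ x ∈ ball z₀ (6 * r), SatisfiesDPP μ α β ε u x) (hx : x ∈ ball z₀ r)
    (hz : z ∈ ball z₀ r) : u x - u z ≤ 4 * A / r * dist x z + 4 * A / r * ε := by
  have hr : 0 < r := hε.trans hεr
  have hs := dist_nonneg (x := x) (y := z)
  have hx6 : x ∈ ball z₀ (6 * r) := ball_subset_ball (by linarith) hx
  have hz6 : z ∈ ball z₀ (6 * r) := ball_subset_ball (by linarith) hz
  have hd : r / 2 ≤ ballWeight r z₀ ((1 / 2 : ℝ) • (x + z)) := by
    have hm : ‖(1 / 2 : ℝ) • (x + z) - z₀‖ ≤ r := by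
      obtain ⟨c, hc, hm, -⟩ := exists_midpoint_eq_add (a := x) (b := z) (x := z₀) (z := z₀)
        (t := r) (mem_ball_iff_norm.1 hx).le (mem_ball_iff_norm.1 hz).le
      rwa [hm, show (1 / 2 : ℝ) • (z₀ + z₀) + c - z₀ = c by module]
    rw [ballWeight, le_div_iff₀ (by positivity)]
    nlinarith [pow_le_pow_left₀ (norm_nonneg _) hm 2]
  have hd0 : 0 < ballWeight r z₀ ((1 / 2 : ℝ) • (x + z)) := by linarith
  have hσ0 : 0 ≤ (dist x z + 2 * ε) / ballWeight r z₀ ((1 / 2 : ℝ) • (x + z)) := by positivity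
  have key : u x - u z
      ≤ A * ((dist x z + 2 * ε) / ballWeight r z₀ ((1 / 2 : ℝ) • (x + z))) := by
    rcases le_or_gt ((dist x z + 2 * ε) / ballWeight r z₀ ((1 / 2 : ℝ) • (x + z)))
      (4 * (α / 4096) ^ 2) with hle | hgt
    · have h1 := pairBound_zero hε hεr hα hβ hαβ hA hAM hu huM hdpp x hx6 z hz6 hd0 hle
      have h2 := mul_le_mul_of_nonneg_left (concaveGauge_le_self hσ0) hA.le
      linarith
    · have h1 := abs_le.1 (huM x hx6 x (mem_ball_self hε))
      have h2 := abs_le.1 (huM z hz6 z (mem_ball_self hε))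
      have h3 := mul_le_mul_of_nonneg_left ((concaveGauge_le_self (sq_nonneg (α / 4096))).trans
        (by linarith [sq_nonneg (α / 4096)] : _ ≤ (dist x z + 2 * ε)
          / ballWeight r z₀ ((1 / 2 : ℝ) • (x + z)))) hA.le
      linarith
  refine key.trans ?_
  have h1 : (dist x z + 2 * ε) / ballWeight r z₀ ((1 / 2 : ℝ) • (x + z))
      ≤ (dist x z + 2 * ε) / (r / 2) :=
    div_le_div_of_nonneg_left (by positivity) (by positivity) hd
  refine (mul_le_mul_of_nonneg_left h1 hA.le).trans ?_
  have e : 4 * A / r * dist x z + 4 * A / r * ε - A * ((dist x z + 2 * ε) / (r / 2))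
      = 2 * A / r * dist x z := by
    field_simp
    ring
  have : 0 ≤ 2 * A / r * dist x z := by positivity
  linarith

end PairBound

/-- A solution of the dynamic programming principle with boundary values in `[-M, M]` takes
values in `[-M, M]`. -/
lemma abs_le_of_forall_satisfiesDPP {E : Type*} [NormedAddCommGroup E] [InnerProductSpace ℝ E]
    [FiniteDimensional ℝ E] [MeasurableSpace E] [BorelSpace E] [Nontrivial E] {μ : Measure E}
    [μ.IsAddHaarMeasure] {α β ε M M' : ℝ} {u : E → ℝ} {Ω : Set E} (hα : 0 < α) (hβ : 0 ≤ β)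
    (hαβ : α + β = 1) (hε : 0 < ε) (hu : Measurable u) (hbdd : Bornology.IsBounded Ω)
    (huM' : ∀ x ∈ Ω ∪ {x | x ∉ Ω ∧ infDist x (frontier Ω) ≤ ε}, |u x| ≤ M')
    (hM : ∀ x ∈ {x | x ∉ Ω ∧ infDist x (frontier Ω) ≤ ε}, |u x| ≤ M)
    (h : ∀ x ∈ Ω, SatisfiesDPP μ α β ε u x) : ∀ x ∈ Ω, ∀ y ∈ ball x ε, |u y| ≤ M := by
  have hsub : thickening ε Ω \ Ω ⊆ {x | x ∉ Ω ∧ infDist x (frontier Ω) ≤ ε} := by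
    rintro y ⟨hy, hyΩ⟩
    obtain ⟨x, hx, hyx⟩ := mem_thickening_iff.1 hy
    exact (ball_subset_union_of_mem hx (mem_ball.2 hyx)).resolve_left hyΩ
  have hunion : Ω ∪ thickening ε Ω \ Ω = thickening ε Ω :=
    union_sdiff_cancel (self_subset_thickening hε Ω)
  have hball : ∀ x ∈ Ω, ball x ε ⊆ Ω ∪ thickening ε Ω \ Ω := fun x hx ↦ by
    rw [hunion]
    exact ball_subset_thickening hx ε
  have hb : Bornology.IsBounded (Ω ∪ thickening ε Ω \ Ω) := by
    rw [hunion]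
    exact hbdd.thickening
  have huM'' : ∀ y ∈ Ω ∪ thickening ε Ω \ Ω, |u y| ≤ M' := fun y hy ↦
    huM' y (union_subset_union_right Ω hsub hy)
  intro x hx y hy
  have h1 := SatisfiesDPP.le_of_le_boundary hα hβ hαβ hε hu hb hball huM''
    (fun y hy ↦ (abs_le.1 (hM y (hsub hy))).2) h y (hball x hx hy)
  have h2 := SatisfiesDPP.le_of_le_boundary hα hβ hαβ hε hu.neg hb hball
    (fun y hy ↦ by simpa using huM'' y hy) (fun y hy ↦ neg_le.1 (abs_le.1 (hM y (hsub hy))).1)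
    (fun x hx ↦ (h x hx).neg) y (hball x hx hy)
  exact abs_le.2 ⟨neg_le.1 h2, h1⟩

/-- **Rough Lipschitz estimate (Lemma 3.1).** For every `p > 2`, integer `n ≥ 2`, `r > 0`
and `M ≥ 0` there exists `C > 0` depending only on `p, n, r, M` such that: whenever
`ε ∈ (0,1)` with `ε < r`, `F` is bounded Borel on `Γ_ε` with `sup |F| ≤ M`, and `u` is a
bounded Borel function on `Ω_ε` satisfying the DPP on `Ω` with `u = F` on `Γ_ε`, then for
every `z₀` with `B_{6r}(z₀) ⊆ Ω` and all `x, y ∈ B_r(z₀)`: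
`|u(x) − u(y)| ≤ C|x − y| + Cε`. -/
theorem rough_lipschitz_estimate (n : ℕ) (hn : 2 ≤ n) (p r M : ℝ)
    (hp : 2 < p) (hr : 0 < r) (hM : 0 ≤ M) :
    ∃ C : ℝ, 0 < C ∧
      ∀ (Ω : Set (EuclideanSpace ℝ (Fin n))),
        IsOpen Ω → IsConnected Ω → Bornology.IsBounded Ω →
      ∀ ε : ℝ, ε ∈ Set.Ioo (0 : ℝ) 1 → ε < r →
      ∀ F u : EuclideanSpace ℝ (Fin n) → ℝ,
        Measurable F →
        (∀ x ∈ {x | x ∉ Ω ∧ Metric.infDist x (frontier Ω) ≤ ε}, |F x| ≤ M) →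
        Measurable u →
        (∃ M', ∀ x ∈ Ω ∪ {x | x ∉ Ω ∧ Metric.infDist x (frontier Ω) ≤ ε}, |u x| ≤ M') →
        (∀ x ∈ {x | x ∉ Ω ∧ Metric.infDist x (frontier Ω) ≤ ε}, u x = F x) →
        (∀ x ∈ Ω, u x =
          ((p - 2) / (n + p)) / (2 * ε) *
              (∫ t in (0 : ℝ)..ε, (sSup (u '' Metric.ball x t) + sInf (u '' Metric.ball x t)))
            + ((n + 2) / (n + p)) * ⨍ z in Metric.ball x ε, u z) →
      ∀ z₀ : EuclideanSpace ℝ (Fin n), Metric.ball z₀ (6 * r) ⊆ Ω →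
      ∀ x ∈ Metric.ball z₀ r, ∀ y ∈ Metric.ball z₀ r,
        |u x - u y| ≤ C * dist x y + C * ε := by
  have hn0 : (0 : ℝ) < n := by exact_mod_cast (by omega : 0 < n)
  have hnp : 0 < n + p := by linarith
  obtain ⟨α, hαdef⟩ : ∃ α, α = (p - 2) / (n + p) := ⟨_, rfl⟩
  obtain ⟨β, hβdef⟩ : ∃ β, β = (n + 2) / (n + p) := ⟨_, rfl⟩
  have hα : 0 < α := hαdef ▸ div_pos (by linarith) hnp
  have hβ : 0 ≤ β := hβdef ▸ div_nonneg (by linarith) hnp.le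
  have hαβ : α + β = 1 := by
    rw [hαdef, hβdef, ← add_div, div_eq_one_iff_eq hnp.ne']
    ring
  have hω : 0 < concaveGauge ((α / 4096) ^ 2) := by
    rw [concaveGauge_sq (by positivity)]
    have : α / 4096 < 1 := by linarith
    have h2 : 0 < (α / 4096) ^ 2 := by positivity
    nlinarith
  obtain ⟨A, hA⟩ : ∃ A, A = (2 * M + 1) / concaveGauge ((α / 4096) ^ 2) := ⟨_, rfl⟩
  have hA0 : 0 < A := hA ▸ div_pos (by linarith) hω
  have hAM : 2 * M ≤ A * concaveGauge ((α / 4096) ^ 2) := by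
    rw [hA, div_mul_cancel₀ _ hω.ne']
    linarith
  have : NeZero n := ⟨by omega⟩
  refine ⟨4 * A / r, by positivity, ?_⟩
  intro Ω _ _ hbdd ε hε hεr F u _ hF hu ⟨M', hM'⟩ huF hdpp z₀ hz₀ x hx y hy
  have hdpp' : ∀ x ∈ Ω, SatisfiesDPP volume α β ε u x := by
    rw [hαdef, hβdef]
    exact hdpp
  have huM := abs_le_of_forall_satisfiesDPP hα hβ hαβ hε.1 hu hbdd hM'
    (fun x hx ↦ by rw [huF x hx]; exact hF x hx) hdpp'
  have h1 := sub_le_of_forall_satisfiesDPP hε.1 hεr hα hβ hαβ hA0 hAM hu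
    (fun x hx ↦ huM x (hz₀ hx)) (fun x hx ↦ hdpp' x (hz₀ hx)) hx hy
  have h2 := sub_le_of_forall_satisfiesDPP hε.1 hεr hα hβ hαβ hA0 hAM hu
    (fun x hx ↦ huM x (hz₀ hx)) (fun x hx ↦ hdpp' x (hz₀ hx)) hy hx
  rw [dist_comm] at h2
  exact abs_le.2 ⟨by linarith, h1⟩
end

section
/- Uniform Lipschitz estimate (Theorem 3.2, first part): for every p > 2, integer n ≥ 2, r > 0 and M ≥ 0 there exists a constant C > 0 (depending only on p, n, r and M) such that the following holds. Let ε ∈ (0,1) with ε < r, and let u be a bounded Borel function on Ω_ε with sup_{Ω_ε}|u| ≤ M satisfying the DPP at every point of Ω. Then for every z₀ with B_{5r}(z₀) ⊂ Ω and all x, y ∈ B_{2r}(z₀): |u(x) − u(y)| ≤ C|x − y|. -/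
open MeasureTheory Metric Set

section BallSup

lemma abs_neg_apply_le {X : Type*} {v : X → ℝ} {M : ℝ} (hv : ∀ x, |v x| ≤ M) (x : X) :
    |(-v) x| ≤ M := by
  simpa using hv x

variable {E : Type*} [PseudoMetricSpace E]

/-- The supremum of `v` over the open ball `ball c s` together with its center, so that the value
is `v c` for `s ≤ 0`. -/
noncomputable def ballSup (v : E → ℝ) (c : E) (s : ℝ) : ℝ :=
  sSup (v '' insert c (ball c s))

/-- The oscillation of `v` over `ball c s`; it vanishes for `s ≤ 0`. -/
noncomputable def ballOsc (v : E → ℝ) (c : E) (s : ℝ) : ℝ :=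
  ballSup v c s + ballSup (-v) c s

variable {v : E → ℝ} {M : ℝ} {c x : E} {s t : ℝ}

lemma ballSup_le {K : ℝ} (hc : v c ≤ K) (h : ∀ y ∈ ball c s, v y ≤ K) : ballSup v c s ≤ K := by
  refine csSup_le ((insert_nonempty _ _).image _) ?_
  rintro _ ⟨y, rfl | hy, rfl⟩
  exacts [hc, h y hy]

lemma le_ballSup_of_mem (hv : ∀ x, |v x| ≤ M) (hx : x ∈ insert c (ball c s)) :
    v x ≤ ballSup v c s := by
  refine le_csSup ⟨M, ?_⟩ (mem_image_of_mem v hx)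
  rintro _ ⟨y, -, rfl⟩
  exact (abs_le.1 (hv y)).2

lemma le_ballSup (hv : ∀ x, |v x| ≤ M) (hx : x ∈ ball c s) : v x ≤ ballSup v c s :=
  le_ballSup_of_mem hv (mem_insert_of_mem _ hx)

lemma self_le_ballSup (hv : ∀ x, |v x| ≤ M) : v c ≤ ballSup v c s :=
  le_ballSup_of_mem hv (mem_insert _ _)

lemma abs_ballSup_le (hv : ∀ x, |v x| ≤ M) (c : E) (s : ℝ) : |ballSup v c s| ≤ M :=
  abs_le.2 ⟨(abs_le.1 (hv c)).1.trans (self_le_ballSup hv),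
    ballSup_le (abs_le.1 (hv c)).2 fun y _ => (abs_le.1 (hv y)).2⟩

lemma ballSup_mono (hv : ∀ x, |v x| ≤ M) (c : E) : Monotone (ballSup v c) := fun _ _ h =>
  ballSup_le (self_le_ballSup hv) fun _ hy => le_ballSup hv (ball_subset_ball h hy)

lemma intervalIntegrable_ballSup (hv : ∀ x, |v x| ≤ M) (c : E) (a b : ℝ) :
    IntervalIntegrable (ballSup v c) volume a b :=
  (ballSup_mono hv c).intervalIntegrable

lemma ballSup_le_ballSup_add (hv : ∀ x, |v x| ≤ M) (hd : dist x c ≤ s) (ht : 0 < t) :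
    ballSup v x t ≤ ballSup v c (s + t) := by
  refine ballSup_le (le_ballSup hv ?_) fun y hy => le_ballSup hv ?_
  · rw [mem_ball]; linarith
  · rw [mem_ball] at hy ⊢
    linarith [dist_triangle y x c]

lemma ballSup_of_nonpos (hs : s ≤ 0) : ballSup v c s = v c := by
  simp [ballSup, ball_eq_empty.2 hs]

lemma ballSup_of_pos (hs : 0 < s) : ballSup v c s = sSup (v '' ball c s) := by
  rw [ballSup, insert_eq_of_mem (mem_ball_self hs)]

lemma neg_ballSup_neg_of_pos (hs : 0 < s) : -ballSup (-v) c s = sInf (v '' ball c s) := by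
  rw [ballSup_of_pos hs, Real.sInf_def]
  congr 2
  rw [← image_neg_eq_neg, image_image]
  rfl

/-- Pulling towards the center: a ball of radius `t` around a point of `ball c s` meets
`insert c (ball c (s - t))`. -/
lemma neg_ballSup_neg_le {E : Type*} [NormedAddCommGroup E] [NormedSpace ℝ E] {v : E → ℝ}
    {c x : E} (hv : ∀ x, |v x| ≤ M) (hx : x ∈ ball c s) (ht : 0 < t) :
    -ballSup (-v) x t ≤ ballSup v c (s - t) := by
  obtain ⟨y, hyc, hyx⟩ : ∃ y ∈ insert c (ball c (s - t)), y ∈ ball x t := by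
    rw [mem_ball, dist_eq_norm] at hx
    have hs : 0 < s := (norm_nonneg _).trans_lt hx
    rcases le_or_gt s t with h | h
    · refine ⟨c, mem_insert _ _, ?_⟩
      rw [mem_ball, dist_comm, dist_eq_norm]
      linarith
    · refine ⟨c + ((s - t) / s) • (x - c), mem_insert_of_mem _ ?_, ?_⟩
      · rw [mem_ball, dist_eq_norm, add_sub_cancel_left, norm_smul, Real.norm_of_nonneg
          (div_nonneg (by linarith) hs.le), div_mul_eq_mul_div, div_lt_iff₀ hs]
        exact mul_lt_mul_of_pos_left hx (by linarith)
      · have : c + ((s - t) / s) • (x - c) - x = -((t / s) • (x - c)) := by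
          have h1 : (s - t) / s = 1 - t / s := by field_simp
          rw [h1, sub_smul, one_smul]; abel
        rw [mem_ball, dist_eq_norm, this, norm_neg, norm_smul, Real.norm_of_nonneg
          (div_nonneg ht.le hs.le), div_mul_eq_mul_div, div_lt_iff₀ hs]
        exact mul_lt_mul_of_pos_left hx ht
  have h1 := le_ballSup (abs_neg_apply_le hv) hyx
  have h2 := le_ballSup_of_mem hv hyc
  simp only [Pi.neg_apply] at h1
  linarith

lemma ballOsc_of_nonpos (hs : s ≤ 0) : ballOsc v c s = 0 := by
  simp [ballOsc, ballSup_of_nonpos hs]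

lemma ballOsc_le (hv : ∀ x, |v x| ≤ M) (c : E) (s : ℝ) : ballOsc v c s ≤ 2 * M := by
  have h1 := (abs_le.1 (abs_ballSup_le hv c s)).2
  have h2 := (abs_le.1 (abs_ballSup_le (abs_neg_apply_le hv) c s)).2
  unfold ballOsc; linarith

lemma ballSup_sub_le_ballOsc (hv : ∀ x, |v x| ≤ M) : ballSup v c s - v c ≤ ballOsc v c s := by
  have h := self_le_ballSup (c := c) (s := s) (abs_neg_apply_le hv)
  simp only [Pi.neg_apply] at h
  unfold ballOsc; linarith

lemma ballOsc_neg : ballOsc (-v) c s = ballOsc v c s := by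
  rw [ballOsc, ballOsc, neg_neg, add_comm]

/-- Translating the center by `dist x y` costs at most `dist x y` times the oscillation. -/
lemma integral_ballSup_sub_le {y : E} {ε : ℝ} (hv : ∀ x, |v x| ≤ M) (hxy : dist x y ≤ ε) :
    (∫ t in (0 : ℝ)..ε, ballSup v x t) - (∫ t in (0 : ℝ)..ε, ballSup v y t) ≤
      dist x y * ballOsc v y (2 * ε) := by
  set d := dist x y with hd
  have hd0 : 0 ≤ d := dist_nonneg
  have hI := intervalIntegrable_ballSup hv y
  have h1 : (∫ t in (0 : ℝ)..ε, ballSup v x t) ≤ ∫ t in (0 : ℝ)..ε, ballSup v y (t + d) := by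
    refine intervalIntegral.integral_mono_on_of_le_Ioo (hd0.trans hxy)
      (intervalIntegrable_ballSup hv x _ _) ?_ fun t ht => ?_
    · exact Monotone.intervalIntegrable fun a b h => ballSup_mono hv y (by linarith)
    · rw [add_comm]
      exact ballSup_le_ballSup_add hv hd.ge ht.1
  have h2 : (∫ t in (0 : ℝ)..ε, ballSup v y (t + d)) = ∫ t in d..(ε + d), ballSup v y t := by
    rw [intervalIntegral.integral_comp_add_right (fun t => ballSup v y t), zero_add]
  have h3 := intervalIntegral.integral_add_adjacent_intervals (hI 0 d) (hI d (ε + d))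
  have h4 := intervalIntegral.integral_add_adjacent_intervals (hI 0 ε) (hI ε (ε + d))
  have h5 : (∫ t in ε..(ε + d), ballSup v y t) ≤ d * ballSup v y (2 * ε) := by
    have := intervalIntegral.integral_mono_on (by linarith) (hI ε (ε + d))
      (intervalIntegrable_const (c := ballSup v y (2 * ε)))
      fun t ht => ballSup_mono hv y (by linarith [ht.2])
    simpa using this
  have h6 : d * v y ≤ ∫ t in (0 : ℝ)..d, ballSup v y t := by
    have := intervalIntegral.integral_mono_on hd0 (intervalIntegrable_const (c := v y))
      (hI 0 d) fun t _ => self_le_ballSup hv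
    simpa using this
  have h7 := mul_le_mul_of_nonneg_left
    (ballSup_sub_le_ballOsc (c := y) (s := 2 * ε) hv) hd0
  linarith

lemma measurable_ballSup_center [MeasurableSpace E] [BorelSpace E] (hv : ∀ x, |v x| ≤ M)
    (hs : 0 < s) : Measurable fun c => ballSup v c s := by
  refine LowerSemicontinuous.measurable fun c K hK => ?_
  simp only [ballSup_of_pos hs] at hK
  obtain ⟨_, ⟨y, hy, rfl⟩, hyK⟩ := exists_lt_of_lt_csSup ((nonempty_ball.2 hs).image _) hK
  filter_upwards [isOpen_ball.mem_nhds (mem_ball_comm.1 hy)] with c' hc'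
  exact hyK.trans_le (le_ballSup hv (mem_ball_comm.1 hc'))

end BallSup

section MeanOperator

variable {E : Type*} [NormedAddCommGroup E] [InnerProductSpace ℝ E] [FiniteDimensional ℝ E]
  [MeasurableSpace E] [BorelSpace E]

/-- The linear averaging operator acting on functions of a center and a radius. -/
noncomputable def meanOp (α β ε : ℝ) (F : E → ℝ → ℝ) (c : E) (s : ℝ) : ℝ :=
  α / (2 * ε) * (∫ t in (0 : ℝ)..ε, (F c (s + t) + F c (s - t)))
    + β * ⨍ h in ball (0 : E) ε, F (c + h) s

/-- The dynamic programming principle at `x`, written in terms of `ballSup`. -/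
def DPPAt (α β ε : ℝ) (v : E → ℝ) (x : E) : Prop :=
  v x = α / (2 * ε) * (∫ t in (0 : ℝ)..ε, (ballSup v x t - ballSup (-v) x t))
    + β * ⨍ h in ball (0 : E) ε, v (x + h)

/-- The integrability needed to manipulate `meanOp α β ε F c s`. -/
structure MeanIntegrable (ε : ℝ) (F : E → ℝ → ℝ) (c : E) (s : ℝ) : Prop where
  radial : IntervalIntegrable (fun t => F c (s + t) + F c (s - t)) volume 0 ε
  center : IntegrableOn (fun h => F (c + h) s) (ball (0 : E) ε)

variable {α β ε M : ℝ} {v : E → ℝ} {c x : E} {s : ℝ} {F G : E → ℝ → ℝ}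

lemma setAverage_mono {X : Type*} [MeasurableSpace X] {μ : Measure X} {S : Set X} {f g : X → ℝ}
    (hS : MeasurableSet S) (hf : IntegrableOn f S μ) (hg : IntegrableOn g S μ)
    (h : ∀ x ∈ S, f x ≤ g x) : ⨍ x in S, f x ∂μ ≤ ⨍ x in S, g x ∂μ := by
  rw [setAverage_eq, setAverage_eq]
  exact smul_le_smul_of_nonneg_left (setIntegral_mono_on hf hg hS h) (by positivity)

lemma integrableOn_ball_of_abs_le_s5 {f : E → ℝ} (hf : Measurable f) (hM : ∀ x, |f x| ≤ M) (x : E)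
    (ρ : ℝ) : IntegrableOn f (ball x ρ) :=
  Measure.integrableOn_of_bounded measure_ball_lt_top.ne hf.aestronglyMeasurable
    (Filter.Eventually.of_forall hM)

lemma meanOp_mono (hα : 0 ≤ α) (hβ : 0 ≤ β) (hε : 0 < ε) (hF : MeanIntegrable ε F c s)
    (hG : MeanIntegrable ε G c s)
    (h1 : ∀ t ∈ Ioo 0 ε, F c (s + t) + F c (s - t) ≤ G c (s + t) + G c (s - t))
    (h2 : ∀ h ∈ ball (0 : E) ε, F (c + h) s ≤ G (c + h) s) :
    meanOp α β ε F c s ≤ meanOp α β ε G c s := by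
  unfold meanOp
  gcongr ?_ * ?_ + ?_ * ?_
  · exact intervalIntegral.integral_mono_on_of_le_Ioo hε.le hF.radial hG.radial h1
  · exact setAverage_mono measurableSet_ball hF.center hG.center h2

lemma meanOp_add (hF : MeanIntegrable ε F c s) (hG : MeanIntegrable ε G c s) :
    meanOp α β ε (fun c s => F c s + G c s) c s = meanOp α β ε F c s + meanOp α β ε G c s := by
  have h1 : (∫ t in (0 : ℝ)..ε, (F c (s + t) + G c (s + t) + (F c (s - t) + G c (s - t)))) =
      (∫ t in (0 : ℝ)..ε, (F c (s + t) + F c (s - t)))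
        + ∫ t in (0 : ℝ)..ε, (G c (s + t) + G c (s - t)) := by
    rw [← intervalIntegral.integral_add hF.radial hG.radial]
    congr 1; ext t; ring
  simp only [meanOp, h1, setAverage_eq, integral_add hF.center hG.center, smul_eq_mul]
  ring

lemma meanIntegrable_add (hF : MeanIntegrable ε F c s) (hG : MeanIntegrable ε G c s) :
    MeanIntegrable ε (fun c s => F c s + G c s) c s where
  radial := (hF.radial.add hG.radial).congr (by intro t _; ring)
  center := hF.center.add hG.center

lemma meanIntegrable_ballSup (hv : ∀ x, |v x| ≤ M) (hs : 0 < s) :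
    MeanIntegrable ε (ballSup v) c s where
  radial := by
    refine IntervalIntegrable.add ?_ ?_
    · exact Monotone.intervalIntegrable fun a b h => ballSup_mono hv c (by linarith)
    · exact Antitone.intervalIntegrable fun a b h => ballSup_mono hv c (by linarith)
  center := by
    refine integrableOn_ball_of_abs_le_s5 ?_ (fun h => abs_ballSup_le hv _ _) _ _
    exact (measurable_ballSup_center hv hs).comp (measurable_const_add c)

lemma meanIntegrable_ballOsc (hv : ∀ x, |v x| ≤ M) (hs : 0 < s) :
    MeanIntegrable ε (ballOsc v) c s :=
  meanIntegrable_add (meanIntegrable_ballSup hv hs)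
    (meanIntegrable_ballSup (abs_neg_apply_le hv) hs)

lemma DPPAt.neg (h : DPPAt α β ε v x) : DPPAt α β ε (-v) x := by
  unfold DPPAt at h ⊢
  have h1 : (∫ t in (0 : ℝ)..ε, (ballSup (-v) x t - ballSup (- -v) x t)) =
      -∫ t in (0 : ℝ)..ε, (ballSup v x t - ballSup (-v) x t) := by
    rw [← intervalIntegral.integral_neg]
    congr 1; ext t; rw [neg_neg]; ring
  rw [h1]
  simp only [Pi.neg_apply, setAverage_eq, integral_neg, smul_eq_mul] at h ⊢
  rw [h]; ring

/-- The supremum over balls is a subsolution of the linear averaging equation. -/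
lemma ballSup_le_meanOp (hα : 0 ≤ α) (hβ : 0 ≤ β) (hε : 0 < ε) (hs : 0 < s)
    (hvm : Measurable v) (hv : ∀ x, |v x| ≤ M) (hD : ∀ x ∈ ball c s, DPPAt α β ε v x) :
    ballSup v c s ≤ meanOp α β ε (ballSup v) c s := by
  have key : ∀ x ∈ ball c s, v x ≤ meanOp α β ε (ballSup v) c s := by
    intro x hx
    have hI := meanIntegrable_ballSup (ε := ε) (c := c) hv hs
    rw [hD x hx, meanOp]
    gcongr ?_ * ?_ + ?_ * ?_
    · refine intervalIntegral.integral_mono_on_of_le_Ioo hε.le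
        ((intervalIntegrable_ballSup hv x _ _).sub
          (intervalIntegrable_ballSup (abs_neg_apply_le hv) x _ _)) hI.radial fun t ht => ?_
      have h1 := ballSup_le_ballSup_add hv (mem_ball.1 hx).le ht.1
      have h2 := neg_ballSup_neg_le hv hx ht.1
      linarith
    · refine setAverage_mono measurableSet_ball ?_ hI.center fun h _ => le_ballSup hv ?_
      · exact integrableOn_ball_of_abs_le_s5 (hvm.comp (measurable_const_add x))
          (fun h => hv _) _ _
      · simpa [mem_ball, dist_add_right] using hx
  exact ballSup_le (key c (mem_ball_self hs)) key

lemma ballOsc_le_meanOp (hα : 0 ≤ α) (hβ : 0 ≤ β) (hε : 0 < ε) (hs : 0 < s)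
    (hvm : Measurable v) (hv : ∀ x, |v x| ≤ M) (hD : ∀ x ∈ ball c s, DPPAt α β ε v x) :
    ballOsc v c s ≤ meanOp α β ε (ballOsc v) c s := by
  have hv' := abs_neg_apply_le hv
  have h := meanOp_add (α := α) (β := β) (meanIntegrable_ballSup (ε := ε) (c := c) hv hs)
    (meanIntegrable_ballSup hv' hs)
  have h1 := ballSup_le_meanOp hα hβ hε hs hvm hv hD
  have h2 := ballSup_le_meanOp hα hβ hε hs hvm.neg hv' fun x hx => (hD x hx).neg
  calc ballOsc v c s ≤ _ := add_le_add h1 h2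
    _ = _ := h.symm

end MeanOperator

section Barrier

variable {E : Type*} [NormedAddCommGroup E] [InnerProductSpace ℝ E] [FiniteDimensional ℝ E]
  [MeasurableSpace E] [BorelSpace E]

/-- A quadratic barrier in the center and radius variables. -/
noncomputable def barrier (a b d ε : ℝ) (c₀ : E) (c : E) (s : ℝ) : ℝ :=
  a * ‖c - c₀‖ ^ 2 + (b * (s + ε) - d * (s + ε) ^ 2)

variable {α β ε M R a b d : ℝ} {v : E → ℝ} {c₀ c : E} {s : ℝ}

lemma integrableOn_ball_of_continuous {f : E → ℝ} (hf : Continuous f) (x : E) (ρ : ℝ) :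
    IntegrableOn f (ball x ρ) :=
  (hf.continuousOn.integrableOn_compact (isCompact_closedBall x ρ)).mono_set ball_subset_closedBall

lemma meanIntegrable_barrier (K : ℝ) :
    MeanIntegrable ε (fun c s => barrier a b d ε c₀ c s + K) c s where
  radial := by
    refine Continuous.intervalIntegrable ?_ _ _
    unfold barrier; fun_prop
  center := by
    refine integrableOn_ball_of_continuous ?_ _ _
    unfold barrier; fun_prop

lemma volume_real_ball_pos (x : E) {ρ : ℝ} (hρ : 0 < ρ) : 0 < volume.real (ball x ρ) :=
  ENNReal.toReal_pos (measure_ball_pos _ _ hρ).ne' measure_ball_lt_top.ne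

lemma setIntegral_ball_inner_eq_zero (w : E) (ρ : ℝ) :
    ∫ h in ball (0 : E) ρ, inner ℝ w h = 0 := by
  have h := integral_neg_eq_self ((ball (0 : E) ρ).indicator fun h => inner ℝ w h) volume
  have h2 : ∀ h : E, (ball (0 : E) ρ).indicator (fun h => inner ℝ w h) (-h) =
      -(ball (0 : E) ρ).indicator (fun h => inner ℝ w h) h := by
    intro h
    by_cases hh : h ∈ ball (0 : E) ρ
    · have : -h ∈ ball (0 : E) ρ := by simpa using hh
      simp [indicator_of_mem, hh, this]
    · have : -h ∉ ball (0 : E) ρ := by simpa using hh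
      simp only [indicator_of_notMem, hh, this, not_false_eq_true, neg_zero]
  simp only [h2, integral_neg] at h
  rw [← integral_indicator measurableSet_ball]
  linarith

lemma setAverage_ball_norm_add_sq_le (hε : 0 < ε) (w : E) :
    ⨍ h in ball (0 : E) ε, ‖w + h‖ ^ 2 ≤ ‖w‖ ^ 2 + ε ^ 2 := by
  have hpos : 0 < volume.real (ball (0 : E) ε) := volume_real_ball_pos _ hε
  have h1 : ∫ h in ball (0 : E) ε, ‖w + h‖ ^ 2 ≤
      ∫ h in ball (0 : E) ε, (‖w‖ ^ 2 + ε ^ 2 + 2 * inner ℝ w h) := by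
    refine setIntegral_mono_on (integrableOn_ball_of_continuous (by fun_prop) _ _)
      (integrableOn_ball_of_continuous (by fun_prop) _ _) measurableSet_ball fun h hh => ?_
    rw [norm_add_sq_real]
    have : ‖h‖ ≤ ε := by simpa using (mem_ball.1 hh).le
    nlinarith [norm_nonneg h]
  rw [integral_add (integrableOn_ball_of_continuous (by fun_prop) _ _)
    (integrableOn_ball_of_continuous (by fun_prop) _ _), integral_const_mul,
    setIntegral_ball_inner_eq_zero, setIntegral_const, smul_eq_mul] at h1
  rw [setAverage_eq, smul_eq_mul, inv_mul_le_iff₀ hpos]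
  linarith

lemma meanOp_barrier_le (hαβ : α + β = 1) (hβ : 0 ≤ β) (hε : 0 < ε) (ha : 0 ≤ a) (K : ℝ) :
    meanOp α β ε (fun c s => barrier a b d ε c₀ c s + K) c s ≤
      barrier a b d ε c₀ c s + K - (α * d / 3 - β * a) * ε ^ 2 := by
  have hpos : 0 < volume.real (ball (0 : E) ε) := volume_real_ball_pos _ hε
  have h1 : (∫ t in (0 : ℝ)..ε, (barrier a b d ε c₀ c (s + t) + K
      + (barrier a b d ε c₀ c (s - t) + K))) =
      2 * ε * (barrier a b d ε c₀ c s + K) - 2 * d * (ε ^ 3 / 3) := by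
    have : ∀ t : ℝ, barrier a b d ε c₀ c (s + t) + K + (barrier a b d ε c₀ c (s - t) + K) =
        2 * (barrier a b d ε c₀ c s + K) - 2 * d * t ^ 2 := by
      intro t; unfold barrier; ring
    simp only [this]
    rw [intervalIntegral.integral_sub (by simp)
      (Continuous.intervalIntegrable (by fun_prop) _ _), intervalIntegral.integral_const,
      intervalIntegral.integral_const_mul, integral_pow]
    simp; ring
  have h2 : ⨍ h in ball (0 : E) ε, (barrier a b d ε c₀ (c + h) s + K) ≤
      barrier a b d ε c₀ c s + K + a * ε ^ 2 := by
    have h3 := setAverage_ball_norm_add_sq_le hε (c - c₀)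
    have h4 : ∀ h : E, barrier a b d ε c₀ (c + h) s + K =
        a * ‖c - c₀ + h‖ ^ 2 + (b * (s + ε) - d * (s + ε) ^ 2 + K) := by
      intro h; unfold barrier; rw [add_sub_right_comm]; ring
    have h5 : ⨍ h in ball (0 : E) ε, (barrier a b d ε c₀ (c + h) s + K) =
        a * (⨍ h in ball (0 : E) ε, ‖c - c₀ + h‖ ^ 2)
          + (b * (s + ε) - d * (s + ε) ^ 2 + K) := by
      simp only [h4, setAverage_eq, smul_eq_mul]
      rw [integral_add (integrableOn_ball_of_continuous (by fun_prop) _ _)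
        (integrableOn_ball_of_continuous (by fun_prop) _ _), integral_const_mul,
        setIntegral_const, smul_eq_mul]
      field_simp
    rw [h5]
    have := mul_le_mul_of_nonneg_left h3 ha
    unfold barrier
    linarith
  rw [meanOp, h1]
  have h6 : α / (2 * ε) * (2 * ε * (barrier a b d ε c₀ c s + K) - 2 * d * (ε ^ 3 / 3)) =
      α * (barrier a b d ε c₀ c s + K) - α * d / 3 * ε ^ 2 := by
    field_simp
  rw [h6]
  have h7 := mul_le_mul_of_nonneg_left h2 hβ
  obtain rfl : α = 1 - β := by linarith
  linarith

/-- Comparison of the oscillation with the barrier in the cylinder of radius and height `R`. -/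
lemma ballOsc_le_barrier (hα : 0 ≤ α) (hβ : 0 ≤ β) (hαβ : α + β = 1) (hε : 0 < ε) (ha : 0 ≤ a)
    (hvm : Measurable v) (hv : ∀ x, |v x| ≤ M)
    (hD : ∀ x ∈ ball c₀ (2 * R), DPPAt α β ε v x)
    (hstrict : β * a < α * d / 3)
    (hbottom : ∀ c, ∀ s ∈ Ioc (-ε) 0, 0 ≤ barrier a b d ε c₀ c s)
    (htop : ∀ c, ∀ s ∈ Ico R (R + ε), 2 * M ≤ barrier a b d ε c₀ c s)
    (hside : ∀ c, R ≤ dist c c₀ → ∀ s ∈ Ioo 0 R, 2 * M ≤ barrier a b d ε c₀ c s)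
    (hinside : ∀ c, ∀ s ∈ Ioo 0 R, 0 ≤ barrier a b d ε c₀ c s)
    (hc : c ∈ ball c₀ R) (hs : s ∈ Ioo 0 R) :
    ballOsc v c s ≤ barrier a b d ε c₀ c s := by
  set δ := (α * d / 3 - β * a) * ε ^ 2 with hδ
  have hδpos : 0 < δ := mul_pos (by linarith) (by positivity)
  have step : ∀ k : ℕ, ∀ c ∈ ball c₀ R, ∀ s ∈ Ioo 0 R,
      ballOsc v c s ≤ barrier a b d ε c₀ c s + max (2 * M - k * δ) 0 := by
    intro k
    induction k with
    | zero =>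
      intro c _ s hs
      have := le_max_left (2 * M - ((0 : ℕ) : ℝ) * δ) 0
      push_cast at this ⊢
      linarith [ballOsc_le hv c s, hinside c s hs]
    | succ k ih =>
      intro c hc s hs
      set K := max (2 * M - k * δ) 0 with hK
      have hK0 : 0 ≤ K := le_max_right _ _
      have hrad : ∀ σ ∈ Ioo (-ε) (R + ε), ballOsc v c σ ≤ barrier a b d ε c₀ c σ + K := by
        intro σ hσ
        rcases le_or_gt σ 0 with h0 | h0
        · rw [ballOsc_of_nonpos h0]
          linarith [hbottom c σ ⟨hσ.1, h0⟩]
        · rcases lt_or_ge σ R with h1 | h1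
          · exact ih c hc σ ⟨h0, h1⟩
          · linarith [htop c σ ⟨h1, hσ.2⟩, ballOsc_le hv c σ]
      have hcen : ∀ c', ballOsc v c' s ≤ barrier a b d ε c₀ c' s + K := by
        intro c'
        rcases lt_or_ge (dist c' c₀) R with h1 | h1
        · exact ih c' h1 s hs
        · linarith [hside c' h1 s hs, ballOsc_le hv c' s]
      have h1 : ballOsc v c s ≤ barrier a b d ε c₀ c s + K - δ := by
        refine (ballOsc_le_meanOp hα hβ hε hs.1 hvm hv fun x hx => hD x ?_).trans
          ((meanOp_mono hα hβ hε (meanIntegrable_ballOsc hv hs.1)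
            (meanIntegrable_barrier K) ?_ ?_).trans (meanOp_barrier_le hαβ hβ hε ha K))
        · rw [mem_ball] at hx hc ⊢
          linarith [dist_triangle x c c₀, hs.2]
        · intro t ht
          have e1 := hrad (s + t) ⟨by linarith [hs.1, ht.1], by linarith [hs.2, ht.2]⟩
          have e2 := hrad (s - t) ⟨by linarith [hs.1, ht.2], by linarith [hs.2, ht.1]⟩
          linarith
        · exact fun h _ => hcen _
      rcases le_total (2 * M - k * δ) 0 with h2 | h2
      · rw [hK, max_eq_right h2] at h1
        linarith [le_max_right (2 * M - ((k + 1 : ℕ) : ℝ) * δ) 0]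
      · rw [hK, max_eq_left h2] at h1
        have := le_max_left (2 * M - ((k + 1 : ℕ) : ℝ) * δ) 0
        push_cast at this ⊢
        linarith
  obtain ⟨k, hk⟩ := exists_nat_gt (2 * M / δ)
  have h := step k c hc s hs
  rw [div_lt_iff₀ hδpos] at hk
  rwa [max_eq_right (by linarith), add_zero] at h

end Barrier

lemma one_add_pow_sub_one_le {q : ℝ} (h0 : 0 ≤ q) (h1 : q ≤ 1) (n : ℕ) :
    (1 + q) ^ n - 1 ≤ 2 ^ n * q := by
  induction n with
  | zero => simpa using h0
  | succ n ih =>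
    have h2 : (1 + q) ^ n ≤ 2 ^ n := pow_le_pow_left₀ (by linarith) (by linarith) n
    rw [pow_succ, pow_succ]
    nlinarith [mul_le_mul_of_nonneg_right h2 h0]

section SmallScale

variable {E : Type*} [NormedAddCommGroup E] [InnerProductSpace ℝ E] [FiniteDimensional ℝ E]
  [MeasurableSpace E] [BorelSpace E] {α β ε M : ℝ} {v : E → ℝ} {x y : E}

lemma setIntegral_ball_zero_add (f : E → ℝ) (x : E) (ρ : ℝ) :
    ∫ h in ball (0 : E) ρ, f (x + h) = ∫ z in ball x ρ, f z := by
  rw [← integral_indicator measurableSet_ball, ← integral_indicator measurableSet_ball,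
    ← integral_add_left_eq_self ((ball x ρ).indicator f) x]
  refine integral_congr_ae (Filter.Eventually.of_forall fun h => ?_)
  have : x + h ∈ ball x ρ ↔ h ∈ ball (0 : E) ρ := by simp
  by_cases hh : h ∈ ball (0 : E) ρ
  · exact (indicator_of_mem hh _).trans (indicator_of_mem (this.2 hh) f).symm
  · exact (indicator_of_notMem hh _).trans (indicator_of_notMem (mt this.1 hh) f).symm

lemma setAverage_ball_zero_add (f : E → ℝ) (x : E) (ρ : ℝ) :
    ⨍ h in ball (0 : E) ρ, f (x + h) = ⨍ z in ball x ρ, f z := by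
  rw [setAverage_eq, setAverage_eq, setIntegral_ball_zero_add, measureReal_def, measureReal_def,
    Measure.addHaar_ball_center volume x]

lemma setAverage_ball_sub_le_s5 (hε : 0 < ε) (hvm : Measurable v) (hv : ∀ x, |v x| ≤ M)
    (hxy : dist x y ≤ ε) :
    (⨍ z in ball x ε, v z) - (⨍ z in ball y ε, v z) ≤
      2 ^ Module.finrank ℝ E * (dist x y / ε) * ballOsc v y (2 * ε) := by
  set d := dist x y with hd
  set N := Module.finrank ℝ E
  set m := -ballSup (-v) y (2 * ε) with hm
  set V := volume.real (ball (0 : E) ε) with hVdef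
  have hd0 : 0 ≤ d := dist_nonneg
  have hV : 0 < V := volume_real_ball_pos _ hε
  have hvx : ∀ z : E, volume.real (ball z ε) = V := fun z => by
    rw [hVdef, measureReal_def, measureReal_def, Measure.addHaar_ball_center volume z]
  have hvd : volume.real (ball y (ε + d)) = (1 + d / ε) ^ N * V := by
    rw [hVdef, measureReal_def, measureReal_def,
      Measure.addHaar_ball_of_pos volume y (by linarith : 0 < ε + d),
      Measure.addHaar_ball_of_pos volume 0 hε, ENNReal.toReal_mul, ENNReal.toReal_mul,
      ENNReal.toReal_ofReal (by positivity), ENNReal.toReal_ofReal (by positivity), ← mul_assoc,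
      ← mul_pow]
    congr 2
    field_simp
  have hlow : ∀ z ∈ ball y (2 * ε), 0 ≤ v z - m := fun z hz => by
    have := le_ballSup (abs_neg_apply_le hv) hz
    simp only [Pi.neg_apply] at this
    linarith
  have hup : ∀ z ∈ ball y (2 * ε), v z - m ≤ ballOsc v y (2 * ε) := fun z hz => by
    have := le_ballSup hv hz
    unfold ballOsc; linarith
  have hsub : ball y (ε + d) ⊆ ball y (2 * ε) := ball_subset_ball (by linarith)
  have hInt : ∀ (z : E) (ρ : ℝ), IntegrableOn (fun z => v z - m) (ball z ρ) := fun z ρ =>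
    (integrableOn_ball_of_abs_le_s5 hvm hv z ρ).sub (integrableOn_const measure_ball_lt_top.ne)
  have hball : ∀ z : E, ∫ w in ball z ε, (v w - m) = (∫ w in ball z ε, v w) - V * m :=
    fun z => by
      rw [integral_sub (integrableOn_ball_of_abs_le_s5 hvm hv z ε)
        (integrableOn_const measure_ball_lt_top.ne), setIntegral_const, hvx, smul_eq_mul]
  have h1 : ∫ z in ball x ε, (v z - m) ≤ ∫ z in ball y (ε + d), (v z - m) := by
    refine setIntegral_mono_set (hInt _ _) ?_ (Filter.Eventually.of_forall ?_)
    · exact (ae_restrict_iff' measurableSet_ball).2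
        (Filter.Eventually.of_forall fun z hz => hlow z (hsub hz))
    · exact ball_subset_ball' le_rfl
  have h2 : ∫ z in ball y (ε + d), (v z - m) = (∫ z in ball y ε, (v z - m))
      + ∫ z in ball y (ε + d) \ ball y ε, (v z - m) := by
    rw [← integral_inter_add_sdiff measurableSet_ball (hInt y (ε + d)),
      inter_eq_self_of_subset_right (ball_subset_ball (le_add_of_nonneg_right hd0))]
  have h3 : ∫ z in ball y (ε + d) \ ball y ε, (v z - m) ≤
      ((1 + d / ε) ^ N * V - V) * ballOsc v y (2 * ε) := by
    have hfin : volume (ball y (ε + d) \ ball y ε) ≠ ⊤ :=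
      (measure_lt_top_of_subset sdiff_subset measure_ball_lt_top.ne).ne
    have := setIntegral_mono_on (g := fun _ => ballOsc v y (2 * ε))
      ((hInt y (ε + d)).mono_set sdiff_subset) (integrableOn_const hfin)
      (measurableSet_ball.diff measurableSet_ball) fun z hz => hup z (hsub hz.1)
    rw [setIntegral_const, smul_eq_mul, measureReal_sdiff (ball_subset_ball (by linarith))
      measurableSet_ball, hvd, hvx] at this
    exact this
  have h4 := one_add_pow_sub_one_le (div_nonneg hd0 hε.le) ((div_le_one hε).2 hxy) N
  have hosc : 0 ≤ ballOsc v y (2 * ε) :=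
    (hlow y (mem_ball_self (by linarith))).trans (hup y (mem_ball_self (by linarith)))
  have h5 := mul_le_mul_of_nonneg_right h4 (mul_nonneg hV.le hosc)
  rw [hball] at h1
  rw [hball] at h2
  rw [setAverage_eq, setAverage_eq, hvx, hvx, smul_eq_mul, smul_eq_mul, ← mul_sub,
    inv_mul_le_iff₀ hV]
  linarith

/-- Below the scale `ε` the dynamic programming principle improves an oscillation bound of order
`ε` to a Lipschitz bound. -/
lemma DPPAt.sub_le {K : ℝ} (hα : 0 ≤ α) (hβ : 0 ≤ β) (hαβ : α + β = 1) (hε : 0 < ε)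
    (hvm : Measurable v) (hv : ∀ x, |v x| ≤ M) (hx : DPPAt α β ε v x) (hy : DPPAt α β ε v y)
    (hxy : dist x y ≤ ε) (hox : ballOsc v x (2 * ε) ≤ K * ε) (hoy : ballOsc v y (2 * ε) ≤ K * ε) :
    v x - v y ≤ 2 ^ Module.finrank ℝ E * K * dist x y := by
  have hv' := abs_neg_apply_le hv
  set d := dist x y with hd
  set N := Module.finrank ℝ E
  have hd0 : 0 ≤ d := dist_nonneg
  have h1 := integral_ballSup_sub_le hv hxy
  have h2 := integral_ballSup_sub_le hv' ((dist_comm y x).trans_le hxy)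
  have h3 := setAverage_ball_sub_le_s5 hε hvm hv hxy
  rw [ballOsc_neg, dist_comm] at h2
  rw [← hd] at h1 h2 h3
  have h1' := h1.trans (mul_le_mul_of_nonneg_left hoy hd0)
  have h2' := h2.trans (mul_le_mul_of_nonneg_left hox hd0)
  have h3' := h3.trans (mul_le_mul_of_nonneg_left hoy (by positivity))
  have hK : 0 ≤ K := by
    have h0 := self_le_ballSup (c := y) (s := 2 * ε) hv
    have h0' := ballSup_sub_le_ballOsc (c := y) (s := 2 * ε) hv
    exact nonneg_of_mul_nonneg_left (by linarith) hε
  have hN : (1 : ℝ) ≤ 2 ^ N := one_le_pow₀ (by norm_num)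
  have e1 : α / (2 * ε) * (d * (K * ε) + d * (K * ε)) = α * (K * d) := by field_simp; ring
  have e2 : 2 ^ N * (d / ε) * (K * ε) = 2 ^ N * (K * d) := by field_simp
  rw [e2] at h3'
  unfold DPPAt at hx hy
  rw [setAverage_ball_zero_add, intervalIntegral.integral_sub
    (intervalIntegrable_ballSup hv _ _ _) (intervalIntegrable_ballSup hv' _ _ _)] at hx hy
  have h4 := mul_le_mul_of_nonneg_left (add_le_add h1' h2')
    (div_nonneg hα (by linarith : 0 ≤ 2 * ε))
  have h5 := mul_le_mul_of_nonneg_left h3' hβ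
  rw [e1] at h4
  have h6 : α * (K * d) ≤ α * (2 ^ N * (K * d)) :=
    mul_le_mul_of_nonneg_left (le_mul_of_one_le_left (by positivity) hN) hα
  have h7 : α * (2 ^ N * (K * d)) + β * (2 ^ N * (K * d)) = 2 ^ N * (K * d) := by
    rw [← add_mul, hαβ, one_mul]
  rw [hx, hy]
  linarith

end SmallScale

section Lipschitz

variable {E : Type*} [NormedAddCommGroup E] [InnerProductSpace ℝ E] [FiniteDimensional ℝ E]
  [MeasurableSpace E] [BorelSpace E] {α β ε M r : ℝ} {v : E → ℝ}

/-- Lipschitz constant for the oscillation at scales above `ε`. -/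
noncomputable def oscConst (α r M : ℝ) : ℝ :=
  (18 / α + 1) * ((2 * M + 1) / r)

lemma ballOsc_le_oscConst {c₀ : E} {s : ℝ} (hα : 0 < α) (hβ : 0 ≤ β) (hαβ : α + β = 1)
    (hr : 0 < r) (hM : 0 ≤ M) (hε : 0 < ε) (hεr : ε < r)
    (hvm : Measurable v) (hv : ∀ x, |v x| ≤ M)
    (hD : ∀ x ∈ ball c₀ (2 * r), DPPAt α β ε v x) (hs : 0 < s) :
    ballOsc v c₀ s ≤ oscConst α r M * (s + ε) := by
  set a := (2 * M + 1) / r ^ 2 with ha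
  set d := 6 * a / α with hd
  set b := oscConst α r M with hb
  have ha0 : 0 < a := by positivity
  have hd0 : 0 < d := by positivity
  have har : a * r ^ 2 = 2 * M + 1 := by rw [ha]; field_simp
  have hαd : α * d = 6 * a := by rw [hd]; field_simp
  have hbd : b = 3 * r * d + (2 * M + 1) / r := by
    rw [hb, oscConst, hd, ha]; field_simp; ring
  have hbr : 2 * M ≤ b * r := by
    have : b * r = 3 * r * d * r + (2 * M + 1) := by rw [hbd]; field_simp
    have : 0 ≤ 3 * r * d * r := by positivity
    linarith
  have hb0 : 0 < b := by rw [hbd]; positivity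
  have hg : ∀ τ, 0 ≤ τ → τ ≤ 3 * r → τ * ((2 * M + 1) / r) ≤ b * τ - d * τ ^ 2 := by
    intro τ h0 h1
    have : b * τ - d * τ ^ 2 - τ * ((2 * M + 1) / r) = τ * (d * (3 * r - τ)) := by
      rw [hbd]; ring
    have : 0 ≤ τ * (d * (3 * r - τ)) := mul_nonneg h0 (mul_nonneg hd0.le (by linarith))
    linarith
  have hg0 : ∀ τ, 0 ≤ τ → τ ≤ 3 * r → 0 ≤ b * τ - d * τ ^ 2 := fun τ h0 h1 =>
    (mul_nonneg h0 (by positivity)).trans (hg τ h0 h1)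
  rcases lt_or_ge s r with hsr | hsr
  · have hsq : ∀ c : E, 0 ≤ a * ‖c - c₀‖ ^ 2 := fun c => by positivity
    have h := ballOsc_le_barrier (R := r) (a := a) (b := b) (d := d) (c₀ := c₀) (c := c₀)
      (s := s) hα.le hβ hαβ hε ha0.le hvm hv hD (by nlinarith) ?_ ?_ ?_ ?_ (mem_ball_self hr)
      ⟨hs, hsr⟩
    · have h' : 0 ≤ d * (s + ε) ^ 2 := by positivity
      simp only [barrier, sub_self, norm_zero] at h
      linarith
    · intro c σ hσ
      have := hg0 (σ + ε) (by linarith [hσ.1]) (by linarith [hσ.2])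
      unfold barrier
      linarith [hsq c]
    · intro c σ hσ
      have h1 := hg (σ + ε) (by linarith [hσ.1]) (by linarith [hσ.2])
      have h2 : r * ((2 * M + 1) / r) ≤ (σ + ε) * ((2 * M + 1) / r) :=
        mul_le_mul_of_nonneg_right (by linarith [hσ.1]) (by positivity)
      rw [mul_div_cancel₀ _ hr.ne'] at h2
      unfold barrier
      linarith [hsq c]
    · intro c hc σ hσ
      have h1 := hg0 (σ + ε) (by linarith [hσ.1]) (by linarith [hσ.2])
      rw [dist_eq_norm] at hc
      have h2 : a * r ^ 2 ≤ a * ‖c - c₀‖ ^ 2 := by gcongr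
      unfold barrier
      linarith
    · intro c σ hσ
      have := hg0 (σ + ε) (by linarith [hσ.1]) (by linarith [hσ.2])
      unfold barrier
      linarith [hsq c]
  · have h1 : b * r ≤ b * (s + ε) := mul_le_mul_of_nonneg_left (by linarith) hb0.le
    linarith [ballOsc_le hv c₀ s]

lemma sub_le_of_dppAt {z₀ x y : E} (hα : 0 < α) (hβ : 0 ≤ β) (hαβ : α + β = 1)
    (hr : 0 < r) (hM : 0 ≤ M) (hε : 0 < ε) (hεr : ε < r)
    (hvm : Measurable v) (hv : ∀ x, |v x| ≤ M)
    (hD : ∀ x ∈ ball z₀ (4 * r), DPPAt α β ε v x)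
    (hx : x ∈ ball z₀ (2 * r)) (hy : y ∈ ball z₀ (2 * r)) :
    v x - v y ≤ 2 ^ Module.finrank ℝ E * (3 * oscConst α r M) * dist x y := by
  have hb : 0 < oscConst α r M := by unfold oscConst; positivity
  have hosc : ∀ c ∈ ball z₀ (2 * r), ∀ s, 0 < s →
      ballOsc v c s ≤ oscConst α r M * (s + ε) := by
    intro c hc s hs
    refine ballOsc_le_oscConst hα hβ hαβ hr hM hε hεr hvm hv (fun w hw => hD w ?_) hs
    rw [mem_ball] at hc hw ⊢
    linarith [dist_triangle w c z₀]
  rcases le_or_gt (dist x y) ε with h | h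
  · have hK : ∀ c ∈ ball z₀ (2 * r), ballOsc v c (2 * ε) ≤ 3 * oscConst α r M * ε :=
      fun c hc => (hosc c hc (2 * ε) (by linarith)).trans_eq (by ring)
    have hsub : ball z₀ (2 * r) ⊆ ball z₀ (4 * r) := ball_subset_ball (by linarith)
    exact DPPAt.sub_le hα.le hβ hαβ hε hvm hv (hD x (hsub hx)) (hD y (hsub hy)) h
      (hK x hx) (hK y hy)
  · have h1 : v x ≤ ballSup v y (dist x y + ε) := le_ballSup hv (by rw [mem_ball]; linarith)
    have h2 := ballSup_sub_le_ballOsc (c := y) (s := dist x y + ε) hv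
    have h3 := hosc y hy (dist x y + ε) (by linarith)
    have h4 : oscConst α r M * (dist x y + ε + ε) ≤ oscConst α r M * (3 * dist x y) :=
      mul_le_mul_of_nonneg_left (by linarith) hb.le
    have h5 : oscConst α r M * (3 * dist x y) ≤
        2 ^ Module.finrank ℝ E * (oscConst α r M * (3 * dist x y)) :=
      le_mul_of_one_le_left (by positivity) (one_le_pow₀ (by norm_num))
    linarith

end Lipschitz

/-- Restricting a solution to a ball keeps the dynamic programming principle at points whose
`ε`-neighborhood stays in the ball. -/
lemma dppAt_indicator {E : Type*} [NormedAddCommGroup E] [InnerProductSpace ℝ E]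
    [FiniteDimensional ℝ E] [MeasurableSpace E] [BorelSpace E] {α β ε : ℝ} {u : E → ℝ} {x : E}
    {B : Set E} (hε : 0 < ε) (hB : ball x ε ⊆ B)
    (h : u x = α / (2 * ε) *
          (∫ t in (0 : ℝ)..ε, (sSup (u '' ball x t) + sInf (u '' ball x t)))
        + β * ⨍ z in ball x ε, u z) :
    DPPAt α β ε (B.indicator u) x := by
  have hball : ∀ t ≤ ε, EqOn (B.indicator u) u (ball x t) := fun t ht z hz =>
    indicator_of_mem (hB (ball_subset_ball ht hz)) u
  unfold DPPAt
  rw [setAverage_ball_zero_add, hball ε le_rfl (mem_ball_self hε), h]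
  congr 2
  · refine intervalIntegral.integral_congr_Ioo_of_le hε.le fun t ht => ?_
    change _ = ballSup (B.indicator u) x t - ballSup (-B.indicator u) x t
    rw [sub_eq_add_neg, neg_ballSup_neg_of_pos ht.1, ballSup_of_pos ht.1,
      (hball t ht.2.le).image_eq]
  · rw [setAverage_eq, setAverage_eq, setIntegral_congr_fun measurableSet_ball (hball ε le_rfl)]


/-- **Uniform Lipschitz estimate (Theorem 3.2, first part).** For every `p > 2`, integer
`n ≥ 2`, `r > 0` and `M ≥ 0` there exists `C > 0` depending only on `p, n, r, M` such that:
whenever `ε ∈ (0,1)` with `ε < r` and `u` is a bounded Borel function on `Ω_ε` with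
`sup_{Ω_ε}|u| ≤ M` satisfying the DPP at every point of `Ω`, then for every `z₀` with
`B_{5r}(z₀) ⊆ Ω` and all `x, y ∈ B_{2r}(z₀)`: `|u(x) − u(y)| ≤ C|x − y|`. -/
theorem uniform_lipschitz_estimate (n : ℕ) (hn : 2 ≤ n) (p r M : ℝ)
    (hp : 2 < p) (hr : 0 < r) (hM : 0 ≤ M) :
    ∃ C : ℝ, 0 < C ∧
      ∀ (Ω : Set (EuclideanSpace ℝ (Fin n))),
        IsOpen Ω → IsConnected Ω → Bornology.IsBounded Ω →
      ∀ ε : ℝ, ε ∈ Set.Ioo (0 : ℝ) 1 → ε < r →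
      ∀ u : EuclideanSpace ℝ (Fin n) → ℝ,
        Measurable u →
        (∀ x ∈ Ω ∪ {x | x ∉ Ω ∧ Metric.infDist x (frontier Ω) ≤ ε}, |u x| ≤ M) →
        (∀ x ∈ Ω, u x =
          ((p - 2) / (n + p)) / (2 * ε) *
              (∫ t in (0 : ℝ)..ε, (sSup (u '' Metric.ball x t) + sInf (u '' Metric.ball x t)))
            + ((n + 2) / (n + p)) * ⨍ z in Metric.ball x ε, u z) →
      ∀ z₀ : EuclideanSpace ℝ (Fin n), Metric.ball z₀ (5 * r) ⊆ Ω →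
      ∀ x ∈ Metric.ball z₀ (2 * r), ∀ y ∈ Metric.ball z₀ (2 * r),
        |u x - u y| ≤ C * dist x y := by
  have hnp : (0 : ℝ) < n + p := by positivity
  set α : ℝ := (p - 2) / (n + p) with hαdef
  set β : ℝ := (n + 2) / (n + p) with hβdef
  have hα : 0 < α := div_pos (by linarith) hnp
  have hβ : 0 ≤ β := by positivity
  have hαβ : α + β = 1 := by rw [hαdef, hβdef, ← add_div, div_eq_one_iff_eq hnp.ne']; ring
  refine ⟨2 ^ n * (3 * oscConst α r M), by unfold oscConst; positivity, ?_⟩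
  intro Ω _ _ _ ε hε hεr u hu hbound hdpp z₀ hz₀ x hx y hy
  set v := (ball z₀ (5 * r)).indicator u with hvdef
  have hvm : Measurable v := hu.indicator measurableSet_ball
  have hv : ∀ x, |v x| ≤ M := by
    intro x
    by_cases h : x ∈ ball z₀ (5 * r)
    · rw [hvdef, indicator_of_mem h]
      exact hbound x (Or.inl (hz₀ h))
    · simpa [hvdef, indicator_of_notMem h] using hM
  have hD : ∀ x ∈ ball z₀ (4 * r), DPPAt α β ε v x := by
    intro x hx
    rw [mem_ball] at hx
    refine dppAt_indicator hε.1 (ball_subset_ball' (by linarith)) (hdpp x (hz₀ ?_))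
    rw [mem_ball]; linarith
  have heq : ∀ x ∈ ball z₀ (2 * r), v x = u x := fun x hx =>
    indicator_of_mem (ball_subset_ball (by linarith) hx) u
  have h1 := sub_le_of_dppAt hα hβ hαβ hr hM hε.1 hεr hvm hv hD hx hy
  have h2 := sub_le_of_dppAt hα hβ hαβ hr hM hε.1 hεr hvm hv hD hy hx
  rw [heq x hx, heq y hy, finrank_euclideanSpace_fin] at h1 h2
  rw [dist_comm] at h2
  exact abs_le.2 ⟨by linarith, h1⟩
end
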